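/- arXiv:1603.01375 — 3 statements merged into one kernel-verified Lean document; each statement's English description precedes it below -/
import Mathlib

section
/- Let Y be a Banach space, let 𝒜 : Y → [0,∞] be lower semicontinuous with relatively compact sublevel sets in Y, and let 𝒲 : Y × Y → [0,∞] be lower semicontinuous and such that 𝒲(u,ũ) = 0 for u, ũ with 𝒜(u) < ∞ and 𝒜(ũ) < ∞ implies u = ũ. Let (U_k)_{k∈ℕ} be a sequence of measurable functions U_k : (0,T) → Y such that sup_{k∈ℕ} ∫₀^T 𝒜(U_k(t)) dt < ∞ and lim_{h→0⁺} sup_{k∈ℕ} ∫₀^{T−h} 𝒲(U_k(t+h), U_k(t)) dt = 0. Then there exists a subsequence of (U_k) that converges in measure with respect to t ∈ (0,T) to a limit function U : (0,T) → Y. -/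
open MeasureTheory Set Filter Topology
open scoped ENNReal

/-- A sequence of functions which is Cauchy in measure along some filter finer than `atTop` has a
subsequence converging almost everywhere. -/
theorem exists_subseq_tendsto_ae_of_cauchy_in_measure {α E : Type*} [MeasurableSpace α]
    {μ : Measure α} [PseudoMetricSpace E] [CompleteSpace E] [Nonempty E] {f : ℕ → α → E}
    {l : Filter ℕ} [l.NeBot] (hl : l ≤ atTop)
    (hf : ∀ ε : ℝ, 0 < ε → ∃ S ∈ l, ∀ j ∈ S, ∀ k ∈ S,
      μ {x | ε ≤ dist (f j x) (f k x)} ≤ ENNReal.ofReal ε) :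
    ∃ φ : ℕ → ℕ, StrictMono φ ∧ ∃ V : α → E,
      ∀ᵐ x ∂μ, Tendsto (fun n => f (φ n) x) atTop (𝓝 (V x)) := by
  choose S hSl hS using fun n : ℕ => hf ((1 / 2 : ℝ) ^ n) (by positivity)
  have hfreq : ∀ n, ∃ᶠ k in atTop, ∀ i ≤ n, k ∈ S i := fun n => by
    have h : ∀ᶠ k in l, ∀ i ≤ n, k ∈ S i :=
      ((Set.finite_Iic n).eventually_all (p := fun i k => k ∈ S i)).2 fun i _ => hSl i
    exact h.frequently.filter_mono hl
  obtain ⟨φ, hφ, hφS⟩ := extraction_forall_of_frequently hfreq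
  refine ⟨φ, hφ, ?_⟩
  have hsum : ∑' n, μ {x | (1 / 2 : ℝ) ^ n ≤ dist (f (φ n) x) (f (φ (n + 1)) x)} ≠ ⊤ := by
    refine ne_top_of_le_ne_top ?_ (ENNReal.tsum_le_tsum fun n =>
      hS n _ (hφS n n le_rfl) _ (hφS (n + 1) n n.le_succ))
    rw [← ENNReal.ofReal_tsum_of_nonneg (fun n => by positivity) summable_geometric_two]
    exact ENNReal.ofReal_ne_top
  have hlim : ∀ᵐ x ∂μ, ∃ y, Tendsto (fun n => f (φ n) x) atTop (𝓝 y) := by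
    filter_upwards [ae_eventually_notMem hsum] with x hx
    obtain ⟨N, hN⟩ := eventually_atTop.1 hx
    have hc : CauchySeq fun n => f (φ (n + N)) x := by
      refine cauchySeq_of_le_geometric (1 / 2) ((1 / 2) ^ N) (by norm_num) fun n => ?_
      have := hN (n + N) (Nat.le_add_left _ _)
      simp only [not_le] at this
      rw [← pow_add, add_comm N n, add_right_comm n 1 N]
      exact this.le
    obtain ⟨y, hy⟩ := cauchySeq_tendsto_of_complete hc
    exact ⟨y, (tendsto_add_atTop_iff_nat (f := fun n => f (φ n) x) N).1 hy⟩
  classical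
  refine ⟨fun x => if h : ∃ y, Tendsto (fun n => f (φ n) x) atTop (𝓝 y) then h.choose
    else Classical.arbitrary E, ?_⟩
  filter_upwards [hlim] with x hx
  simpa only [dif_pos hx] using hx.choose_spec

/-- The area of the part of a symmetric set near the diagonal, bounded through the lengths of its
slices parallel to the diagonal. -/
theorem volume_inter_strip_le {T h : ℝ} {β : ℝ≥0∞} {D : Set (ℝ × ℝ)}
    (hD : MeasurableSet D) (hsymm : ∀ z ∈ D, z.swap ∈ D) (hirr : ∀ t, (t, t) ∉ D)
    (hβ : ∀ τ ∈ Ioo 0 h, volume {t | t ∈ Ico 0 (T - τ) ∧ (t + τ, t) ∈ D} ≤ β) :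
    volume {z | z ∈ D ∧ z.1 ∈ Ico 0 T ∧ z.2 ∈ Ico 0 T ∧ |z.1 - z.2| < h}
      ≤ ENNReal.ofReal h * (2 * β) := by
  set P : Set (ℝ × ℝ) := D ∩ {z | z.1 < T ∧ 0 ≤ z.2 ∧ 0 < z.1 - z.2 ∧ z.1 - z.2 < h} with hP
  have hPm : MeasurableSet P := by
    refine hD.inter (.inter ?_ (.inter ?_ (.inter ?_ ?_)))
    · exact measurableSet_lt measurable_fst measurable_const
    · exact measurableSet_le measurable_const measurable_snd
    · exact measurableSet_lt measurable_const (measurable_fst.sub measurable_snd)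
    · exact measurableSet_lt (measurable_fst.sub measurable_snd) measurable_const
  have hPle : volume P ≤ ENNReal.ofReal h * β := by
    have hmp := measurePreserving_add_prod (volume : Measure ℝ) (volume : Measure ℝ)
    rw [Measure.volume_eq_prod, ← hmp.measure_preimage hPm.nullMeasurableSet,
      Measure.prod_apply (hmp.measurable hPm)]
    calc _ ≤ ∫⁻ τ, (Ioo 0 h).indicator (fun _ => β) τ := lintegral_mono fun τ => ?_
      _ = ENNReal.ofReal h * β := by
        rw [lintegral_indicator_const measurableSet_Ioo, Real.volume_Ioo, sub_zero, mul_comm]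
    by_cases hτ : τ ∈ Ioo 0 h
    · rw [indicator_of_mem hτ]
      refine (measure_mono ?_).trans (hβ τ hτ)
      rintro t ⟨h1, h2, h3, -, -⟩
      simp only at h1 h2 h3
      exact ⟨⟨h3, by linarith⟩, by rwa [add_comm]⟩
    · rw [indicator_of_notMem hτ, nonpos_iff_eq_zero]
      convert measure_empty (μ := (volume : Measure ℝ))
      refine eq_empty_of_forall_notMem ?_
      rintro t ⟨-, -, -, h4, h5⟩
      simp only [add_sub_cancel_right] at h4 h5
      exact hτ ⟨h4, h5⟩
  have hswap : volume (Prod.swap ⁻¹' P) = volume P :=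
    (Measure.measurePreserving_swap (μ := (volume : Measure ℝ))
      (ν := (volume : Measure ℝ))).measure_preimage hPm.nullMeasurableSet
  calc _ ≤ volume (P ∪ Prod.swap ⁻¹' P) := measure_mono ?_
    _ ≤ volume P + volume (Prod.swap ⁻¹' P) := measure_union_le _ _
    _ ≤ ENNReal.ofReal h * β + ENNReal.ofReal h * β := by rw [hswap]; gcongr
    _ = ENNReal.ofReal h * (2 * β) := by ring
  rintro ⟨s, t⟩ ⟨h1, ⟨h2, h3⟩, ⟨h4, h5⟩, h6⟩
  simp only at h2 h3 h4 h5 h6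
  rw [abs_lt] at h6
  rcases lt_trichotomy s t with hst | rfl | hst
  · refine Or.inr ⟨hsymm _ h1, h5, h2, ?_, ?_⟩ <;> simp only [Prod.fst_swap, Prod.snd_swap] <;>
      linarith
  · exact absurd h1 (hirr s)
  · refine Or.inl ⟨h1, h3, h4, ?_, ?_⟩ <;> simp only <;> linarith

/-- On a set of finite measure, a function is close to one of its values, up to a set controlled
by the product measure of the pairs of points at which it oscillates or leaves `K`. -/
theorem exists_value_mul_measure_le {α Y : Type*} [MeasurableSpace α] {μ : Measure α} [SFinite μ]
    [NormedAddCommGroup Y] {g : α → Y} (hg : StronglyMeasurable g) {K : Set Y} (hK : IsClosed K)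
    {ε : ℝ} {Q : Set α} (hQ : MeasurableSet Q) (hQtop : μ Q ≠ ⊤) :
    ∃ v ∈ insert 0 K, μ Q * μ {t | t ∈ Q ∧ ε ≤ ‖g t - v‖} ≤
      μ.prod μ ({z | g z.1 ∈ K ∧ g z.2 ∈ K ∧ ε ≤ ‖g z.1 - g z.2‖} ∩ Q ×ˢ Q)
        + μ Q * (2 * μ {t | t ∈ Q ∧ g t ∉ K}) := by
  rcases eq_or_ne (μ Q) 0 with hQ0 | hQ0
  · exact ⟨0, mem_insert _ _, by simp [hQ0]⟩
  borelize Y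
  set D : Set (α × α) := {z | g z.1 ∈ K ∧ g z.2 ∈ K ∧ ε ≤ ‖g z.1 - g z.2‖}
  set E : Set α := {t | t ∈ Q ∧ g t ∉ K}
  have hE : MeasurableSet E := hQ.inter (hg.measurable hK.measurableSet).compl
  have hD : MeasurableSet D := by
    refine .inter ((hg.measurable.comp measurable_fst) hK.measurableSet)
      (.inter ((hg.measurable.comp measurable_snd) hK.measurableSet) ?_)
    exact measurableSet_le measurable_const
      ((hg.comp_measurable measurable_fst).sub (hg.comp_measurable measurable_snd)).norm.measurable
  set B : Set (α × α) := D ∩ Q ×ˢ Q ∪ (E ×ˢ Q ∪ Q ×ˢ E)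
  have hB : MeasurableSet B :=
    (hD.inter (hQ.prod hQ)).union ((hE.prod hQ).union (hQ.prod hE))
  obtain ⟨p, hpQ, hp⟩ := exists_le_setLAverage hQ0 hQtop
    (measurable_measure_prodMk_right (μ := μ) hB).aemeasurable
  have hBle : μ Q * μ ((fun x => (x, p)) ⁻¹' B) ≤ μ.prod μ (D ∩ Q ×ˢ Q) + μ Q * (2 * μ E) := by
    calc _ ≤ ∫⁻ y in Q, μ ((fun x => (x, y)) ⁻¹' B) ∂μ := by
          rw [setLAverage_eq] at hp
          calc _ ≤ _ := mul_le_mul_right hp _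
            _ ≤ _ := ENNReal.mul_div_le
      _ ≤ ∫⁻ y, μ ((fun x => (x, y)) ⁻¹' B) ∂μ := setLIntegral_le_lintegral _ _
      _ = μ.prod μ B := (Measure.prod_apply_symm hB).symm
      _ ≤ μ.prod μ (D ∩ Q ×ˢ Q) + (μ.prod μ (E ×ˢ Q) + μ.prod μ (Q ×ˢ E)) :=
          (measure_union_le _ _).trans (by gcongr; exact measure_union_le _ _)
      _ = _ := by rw [Measure.prod_prod, Measure.prod_prod]; ring
  by_cases hpK : g p ∈ K
  · refine ⟨g p, mem_insert_of_mem _ hpK, le_trans ?_ hBle⟩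
    gcongr
    rintro t ⟨htQ, ht⟩
    by_cases htK : g t ∈ K
    · exact Or.inl ⟨⟨htK, hpK, ht⟩, htQ, hpQ⟩
    · exact Or.inr (Or.inl ⟨⟨htQ, htK⟩, hpQ⟩)
  · refine ⟨0, mem_insert _ _, le_trans ?_ hBle⟩
    gcongr
    rintro t ⟨htQ, -⟩
    exact Or.inr (Or.inr ⟨htQ, hpQ, hpK⟩)

/-- Approximation in measure by step functions with values in `insert 0 K`, quantified by the
oscillation of the translates. -/
theorem exists_step_approx {Y : Type*} [NormedAddCommGroup Y] {g : ℝ → Y}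
    (hg : StronglyMeasurable g) {K : Set Y} (hK : IsClosed K) {ε h : ℝ} (hε : 0 < ε) (hh : 0 < h)
    {N : ℕ} {β : ℝ≥0∞}
    (hβ : ∀ τ ∈ Ioo 0 h, volume {t | t ∈ Ico 0 (N * h - τ) ∧
      g (t + τ) ∈ K ∧ g t ∈ K ∧ ε ≤ ‖g (t + τ) - g t‖} ≤ β) :
    ∃ v : Fin N → Y, (∀ i, v i ∈ insert 0 K) ∧
      ∑ i : Fin N, volume {t | t ∈ Ico (i * h) ((i + 1) * h) ∧ ε ≤ ‖g t - v i‖} ≤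
        2 * β + 2 * volume {t | t ∈ Ico 0 (N * h) ∧ g t ∉ K} := by
  borelize Y
  set Q : Fin N → Set ℝ := fun i => Ico (i * h) ((i + 1) * h) with hQdef
  set D : Set (ℝ × ℝ) := {z | g z.1 ∈ K ∧ g z.2 ∈ K ∧ ε ≤ ‖g z.1 - g z.2‖} with hDdef
  have hD : MeasurableSet D := by
    refine .inter ((hg.measurable.comp measurable_fst) hK.measurableSet)
      (.inter ((hg.measurable.comp measurable_snd) hK.measurableSet) ?_)
    exact measurableSet_le measurable_const
      ((hg.comp_measurable measurable_fst).sub (hg.comp_measurable measurable_snd)).norm.measurable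
  have hvolQ : ∀ i, volume (Q i) = ENNReal.ofReal h := fun i => by
    rw [hQdef, Real.volume_Ico]; congr 1; ring
  have hQm : ∀ i, MeasurableSet (Q i) := fun i => measurableSet_Ico
  have hQsub : ∀ i, Q i ⊆ Ico 0 (N * h) := fun i => by
    refine Ico_subset_Ico (by positivity) ?_
    have : ((i : ℕ) + 1 : ℝ) ≤ N := by exact_mod_cast i.2
    gcongr
  have hQdisj : Pairwise (Function.onFun Disjoint Q) := by
    intro i j hij
    rw [Function.onFun, Set.disjoint_left]
    rintro t ⟨h1, h2⟩ ⟨h3, h4⟩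
    have h5 : (i : ℝ) < (j : ℕ) + 1 := lt_of_mul_lt_mul_right (h1.trans_lt h4) hh.le
    have h6 : (j : ℝ) < (i : ℕ) + 1 := lt_of_mul_lt_mul_right (h3.trans_lt h2) hh.le
    norm_cast at h5 h6
    exact hij (Fin.ext (by omega))
  choose v hvK hv using fun i => exists_value_mul_measure_le (μ := volume) hg hK (ε := ε) (hQm i)
    (by rw [hvolQ]; exact ENNReal.ofReal_ne_top)
  refine ⟨v, hvK, ?_⟩
  have hE : ∑ i, volume {t | t ∈ Q i ∧ g t ∉ K} ≤ volume {t | t ∈ Ico 0 (N * h) ∧ g t ∉ K} := by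
    rw [← tsum_fintype (L := .unconditional _), ← measure_iUnion]
    · exact measure_mono (iUnion_subset fun i t ht => ⟨hQsub i ht.1, ht.2⟩)
    · exact fun i j hij => (hQdisj hij).mono (fun _ h => h.1) fun _ h => h.1
    · exact fun i => (hQm i).inter (hg.measurable hK.measurableSet).compl
  have hDle : ∑ i, volume (D ∩ Q i ×ˢ Q i) ≤ ENNReal.ofReal h * (2 * β) := by
    rw [← tsum_fintype (L := .unconditional _), ← measure_iUnion]
    · refine le_trans (measure_mono (iUnion_subset ?_))
        (volume_inter_strip_le (T := N * h) (h := h) (β := β) hD ?_ ?_ hβ)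
      · rintro i ⟨s, t⟩ ⟨hst, hs, ht⟩
        refine ⟨hst, hQsub i hs, hQsub i ht, ?_⟩
        have h1 := hs.1; have h2 := hs.2; have h3 := ht.1; have h4 := ht.2
        simp only at h1 h2 h3 h4 ⊢
        rw [abs_lt]; constructor <;> linarith
      · rintro ⟨s, t⟩ ⟨h1, h2, h3⟩
        exact ⟨h2, h1, by rwa [norm_sub_rev] at h3⟩
      · rintro t ⟨-, -, h3⟩
        simp only [sub_self, norm_zero] at h3
        exact absurd h3 hε.not_ge
    · intro i j hij
      exact (Set.disjoint_prod.2 (Or.inl (hQdisj hij))).mono inter_subset_right inter_subset_right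
    · exact fun i => hD.inter ((hQm i).prod (hQm i))
  have h0 : ENNReal.ofReal h ≠ 0 := by simpa using hh
  refine (ENNReal.mul_le_mul_iff_right h0 ENNReal.ofReal_ne_top).1 ?_
  calc _ = ∑ i, volume (Q i) * volume {t | t ∈ Q i ∧ ε ≤ ‖g t - v i‖} := by
        simp_rw [hvolQ, Finset.mul_sum]; rfl
    _ ≤ ∑ i, (volume (D ∩ Q i ×ˢ Q i) + volume (Q i) * (2 * volume {t | t ∈ Q i ∧ g t ∉ K})) :=
        Finset.sum_le_sum fun i _ => hv i
    _ = ∑ i, volume (D ∩ Q i ×ˢ Q i)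
          + ENNReal.ofReal h * (2 * ∑ i, volume {t | t ∈ Q i ∧ g t ∉ K}) := by
        simp_rw [hvolQ, Finset.sum_add_distrib, Finset.mul_sum]
    _ ≤ ENNReal.ofReal h * (2 * β)
          + ENNReal.ofReal h * (2 * volume {t | t ∈ Ico 0 (N * h) ∧ g t ∉ K}) := by gcongr
    _ = _ := by ring

/-- A lower semicontinuous `W` that vanishes on a compact square only along the diagonal is bounded
below away from the diagonal. -/
theorem exists_pos_le_of_dist_ge {Y : Type*} [NormedAddCommGroup Y] {W : Y × Y → ℝ≥0∞}
    (hW : LowerSemicontinuous W) {K : Set Y} (hK : IsCompact K)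
    (hsep : ∀ u ∈ K, ∀ v ∈ K, W (u, v) = 0 → u = v) {ε : ℝ} (hε : 0 < ε) :
    ∃ δ : ℝ≥0∞, δ ≠ 0 ∧ δ ≠ ⊤ ∧ ∀ u ∈ K, ∀ v ∈ K, ε ≤ ‖u - v‖ → δ ≤ W (u, v) := by
  set S : Set (Y × Y) := K ×ˢ K ∩ {z | ε ≤ ‖z.1 - z.2‖}
  have hS : IsCompact S := (hK.prod hK).inter_right
    (isClosed_le continuous_const (continuous_fst.sub continuous_snd).norm)
  rcases S.eq_empty_or_nonempty with hSe | hSne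
  · refine ⟨1, one_ne_zero, ENNReal.one_ne_top, fun u hu v hv huv => ?_⟩
    exact absurd (show (u, v) ∈ S from ⟨⟨hu, hv⟩, huv⟩) (hSe ▸ notMem_empty _)
  obtain ⟨z, hz, hmin⟩ := (hW.lowerSemicontinuousOn S).exists_isMinOn hSne hS
  refine ⟨min (W z) 1, ?_, ne_top_of_le_ne_top ENNReal.one_ne_top (min_le_right _ _),
    fun u hu v hv huv => (min_le_left _ _).trans (hmin (show (u, v) ∈ S from ⟨⟨hu, hv⟩, huv⟩))⟩
  intro h0
  have hz0 : W z = 0 := by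
    rcases min_eq_iff.1 h0 with h | h
    · exact h.1
    · exact absurd h.1 one_ne_zero
  have := hsep z.1 hz.1.1 z.2 hz.1.2 hz0
  have h2 : ε ≤ ‖z.1 - z.2‖ := hz.2
  rw [this, sub_self, norm_zero] at h2
  exact hε.not_ge h2

theorem volume_Ico_sep_le_Ioo (a b : ℝ) (p : ℝ → Prop) :
    volume {t | t ∈ Ico a b ∧ p t} ≤ volume {t | t ∈ Ioo a b ∧ p t} := by
  calc _ ≤ volume ({a} ∪ {t | t ∈ Ioo a b ∧ p t}) := measure_mono ?_
    _ ≤ volume {a} + volume {t | t ∈ Ioo a b ∧ p t} := measure_union_le _ _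
    _ = _ := by simp
  rintro t ⟨⟨h1, h2⟩, h3⟩
  rcases h1.eq_or_lt with rfl | h1
  · exact Or.inl rfl
  · exact Or.inr ⟨⟨h1, h2⟩, h3⟩

/-- Under the tightness and translation conditions, the sequence is Cauchy in measure along any
ultrafilter. -/
theorem exists_mem_ultrafilter_cauchy_in_measure {ι Y : Type*} [NormedAddCommGroup Y]
    {T : ℝ} (hT : 0 < T) {A : Y → ℝ≥0∞} (hA_lsc : LowerSemicontinuous A)
    (hA_cpt : ∀ c : ℝ≥0∞, c ≠ ⊤ → IsCompact (closure {y : Y | A y ≤ c}))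
    {W : Y × Y → ℝ≥0∞} (hW_lsc : LowerSemicontinuous W)
    (hW_sep : ∀ u v : Y, A u ≠ ⊤ → A v ≠ ⊤ → W (u, v) = 0 → u = v)
    {g : ι → ℝ → Y} (hg : ∀ k, StronglyMeasurable (g k)) {C : ℝ≥0∞} (hC : C ≠ ⊤)
    (hgA : ∀ k, ∫⁻ t in Ioo (0 : ℝ) T, A (g k t) ≤ C)
    (hgW : Tendsto
      (fun h : ℝ => ⨆ k, ∫⁻ t in Ioo (0 : ℝ) (T - h), W (g k (t + h), g k t))
      (𝓝[>] (0 : ℝ)) (𝓝 0))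
    (l : Ultrafilter ι) {ε : ℝ} (hε : 0 < ε) :
    ∃ S ∈ l, ∀ j ∈ S, ∀ k ∈ S,
      volume.restrict (Ioo 0 T) {t | ε ≤ dist (g j t) (g k t)} ≤ ENNReal.ofReal ε := by
  borelize Y
  set η : ℝ := ε / 8 with hη
  have hη0 : 0 < η := by positivity
  set e : ℝ≥0∞ := ENNReal.ofReal η with he
  have he0 : e ≠ 0 := by simpa [he] using hη0
  have hetop : e ≠ ⊤ := ENNReal.ofReal_ne_top
  set M : ℝ≥0∞ := (C + 1) / e with hM
  have hM0 : M ≠ 0 := (ENNReal.div_pos (by simp) hetop).ne'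
  have hMtop : M ≠ ⊤ := ENNReal.div_ne_top (by simp [hC]) he0
  set K : Set Y := {y | A y ≤ M} with hKdef
  have hKcl : IsClosed K := hA_lsc.isClosed_preimage M
  have hKcpt : IsCompact K := by simpa only [← hKdef, hKcl.closure_eq] using hA_cpt M hMtop
  have hE : ∀ k, volume {t | t ∈ Ico 0 T ∧ g k t ∉ K} ≤ e := fun k => by
    refine (volume_Ico_sep_le_Ioo 0 T _).trans ?_
    calc volume {t | t ∈ Ioo 0 T ∧ g k t ∉ K}
        ≤ volume.restrict (Ioo 0 T) {t | M ≤ A (g k t)} := by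
          rw [Measure.restrict_apply' measurableSet_Ioo]
          refine measure_mono fun t ht => ⟨?_, ht.1⟩
          exact (not_le.1 fun hle : A (g k t) ≤ M => ht.2 hle).le
      _ ≤ (∫⁻ t in Ioo (0 : ℝ) T, A (g k t)) / M :=
          meas_ge_le_lintegral_div (hA_lsc.measurable.comp (hg k).measurable).aemeasurable
            hM0 hMtop
      _ ≤ e := by
          refine ENNReal.div_le_of_le_mul ?_
          rw [hM, ENNReal.mul_div_cancel he0 hetop]
          exact (hgA k).trans le_self_add
  obtain ⟨δ, hδ0, hδtop, hδ⟩ := exists_pos_le_of_dist_ge hW_lsc hKcpt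
    (fun u hu v hv => hW_sep u v (ne_top_of_le_ne_top hMtop hu) (ne_top_of_le_ne_top hMtop hv)) hη0
  have hev := hgW.eventually_le_const (pos_iff_ne_zero.2 (mul_ne_zero hδ0 he0))
  obtain ⟨r, hr0, hr⟩ := mem_nhdsGT_iff_exists_Ioo_subset.1 hev
  obtain ⟨N, hN⟩ := exists_nat_gt (T / r)
  have hr0 : 0 < r := hr0
  have hN0 : (0 : ℝ) < N := (div_pos hT hr0).trans hN
  set h : ℝ := T / N with hh
  have hh0 : 0 < h := div_pos hT hN0
  have hhr : h < r := by rw [hh, div_lt_iff₀ hN0]; rwa [div_lt_iff₀ hr0, mul_comm] at hN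
  have hNh : N * h = T := mul_div_cancel₀ _ hN0.ne'
  have hβ : ∀ k, ∀ τ ∈ Ioo 0 h, volume {t | t ∈ Ico 0 (N * h - τ) ∧
      g k (t + τ) ∈ K ∧ g k t ∈ K ∧ η ≤ ‖g k (t + τ) - g k t‖} ≤ e := by
    intro k τ hτ
    rw [hNh]
    refine (volume_Ico_sep_le_Ioo 0 _ _).trans ?_
    have hgτ : StronglyMeasurable fun t => g k (t + τ) :=
      (hg k).comp_measurable (measurable_id.add_const τ)
    set F : Set ℝ := {t | g k (t + τ) ∈ K ∧ g k t ∈ K ∧ η ≤ ‖g k (t + τ) - g k t‖} with hF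
    have hFm : MeasurableSet F :=
      .inter (hgτ.measurable hKcl.measurableSet) (.inter ((hg k).measurable hKcl.measurableSet)
        (measurableSet_le measurable_const (hgτ.sub (hg k)).norm.measurable))
    have hle : δ * volume.restrict (Ioo 0 (T - τ)) F ≤ δ * e :=
      calc δ * volume.restrict (Ioo 0 (T - τ)) F
          = ∫⁻ t in Ioo 0 (T - τ), F.indicator (fun _ => δ) t :=
            (lintegral_indicator_const hFm δ).symm
        _ ≤ ∫⁻ t in Ioo 0 (T - τ), W (g k (t + τ), g k t) :=
            lintegral_mono fun t => indicator_le' (f := fun _ => δ)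
              (g := fun t => W (g k (t + τ), g k t))
              (fun t ht => hδ _ ht.1 _ ht.2.1 ht.2.2) (fun _ _ => zero_le) t
        _ ≤ δ * e := (le_iSup (fun k => ∫⁻ t in Ioo 0 (T - τ), W (g k (t + τ), g k t)) k).trans
            (hr ⟨hτ.1, hτ.2.trans hhr⟩)
    have := (ENNReal.mul_le_mul_iff_right hδ0 hδtop).1 hle
    rwa [Measure.restrict_apply' measurableSet_Ioo, inter_comm] at this
  choose v hvK hv using fun k => exists_step_approx (hg k) hKcl hη0 hh0 (hβ k)
  have hv4 : ∀ k, ∑ i : Fin N, volume {t | t ∈ Ico (i * h) ((i + 1) * h) ∧ η ≤ ‖g k t - v k i‖}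
      ≤ 4 * e := fun k => by
    refine (hv k).trans ?_
    rw [hNh]
    calc _ ≤ 2 * e + 2 * e := by gcongr; exact hE k
      _ = 4 * e := by ring
  obtain ⟨w, -, hw⟩ := (isCompact_univ_pi fun _ : Fin N => hKcpt.insert 0).ultrafilter_le_nhds
    (l.map v) (le_principal_iff.2 (univ_mem' (f := (l : Filter ι)) fun k i _ => hvK k i))
  have hw : Tendsto v l (𝓝 w) := hw
  refine ⟨{k | dist (v k) w < η}, hw (Metric.ball_mem_nhds w hη0), fun j hj k hk => ?_⟩
  rw [Measure.restrict_apply' measurableSet_Ioo]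
  calc _ ≤ volume ((⋃ i : Fin N, {t | t ∈ Ico (i * h) ((i + 1) * h) ∧ η ≤ ‖g j t - v j i‖}) ∪
          ⋃ i : Fin N, {t | t ∈ Ico (i * h) ((i + 1) * h) ∧ η ≤ ‖g k t - v k i‖}) :=
        measure_mono ?_
    _ ≤ 4 * e + 4 * e := (measure_union_le _ _).trans (add_le_add
        ((measure_iUnion_fintype_le _ _).trans (hv4 j))
        ((measure_iUnion_fintype_le _ _).trans (hv4 k)))
    _ = ENNReal.ofReal ε := by
        rw [← add_mul, he, ← ENNReal.ofReal_ofNat 4, ← ENNReal.ofReal_add (by norm_num)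
          (by norm_num), ← ENNReal.ofReal_mul (by norm_num), hη]
        congr 1; ring
  rintro t ⟨ht, ht0, htT⟩
  have hfl : ⌊t / h⌋₊ < N := by
    rw [Nat.floor_lt (by positivity), div_lt_iff₀ hh0, hNh]; exact htT
  set i : Fin N := ⟨⌊t / h⌋₊, hfl⟩
  have hti : t ∈ Ico (i * h) ((i + 1) * h) :=
    ⟨(le_div_iff₀ hh0).1 (Nat.floor_le (by positivity)),
      (div_lt_iff₀ hh0).1 (Nat.lt_floor_add_one _)⟩
  by_contra! hcon
  simp only [mem_union, mem_iUnion, not_or, not_exists] at hcon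
  have h1 : dist (g j t) (v j i) < η := by
    rw [dist_eq_norm]; exact not_le.1 fun hle => hcon.1 i ⟨hti, hle⟩
  have h2 : dist (g k t) (v k i) < η := by
    rw [dist_eq_norm]; exact not_le.1 fun hle => hcon.2 i ⟨hti, hle⟩
  have h3 : dist (v j i) (w i) < η := (dist_le_pi_dist _ _ i).trans_lt hj
  have h4 : dist (v k i) (w i) < η := (dist_le_pi_dist _ _ i).trans_lt hk
  have h5 : ε ≤ dist (g j t) (g k t) := ht
  have h6 := dist_triangle4 (g j t) (v j i) (v k i) (g k t)
  have h7 := dist_triangle_right (v j i) (v k i) (w i)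
  rw [dist_comm (v k i) (g k t)] at h6
  linarith

/-- A function along which `A` is integrable is essentially valued in the σ-compact set where `A`
is finite, hence strongly measurable. -/
theorem aestronglyMeasurable_of_lintegral_ne_top {α Y : Type*} [MeasurableSpace α] {μ : Measure α}
    [NormedAddCommGroup Y] [MeasurableSpace Y] [BorelSpace Y] {A : Y → ℝ≥0∞}
    (hA_lsc : LowerSemicontinuous A)
    (hA_cpt : ∀ c : ℝ≥0∞, c ≠ ⊤ → IsCompact (closure {y : Y | A y ≤ c}))
    {u : α → Y} (hu : AEMeasurable u μ) (huA : ∫⁻ t, A (u t) ∂μ ≠ ⊤) :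
    AEStronglyMeasurable u μ := by
  refine aestronglyMeasurable_iff_aemeasurable_separable.2
    ⟨hu, ⋃ n : ℕ, {y | A y ≤ n}, .iUnion fun n =>
      ((hA_cpt n (ENNReal.natCast_ne_top n)).isSeparable).mono subset_closure, ?_⟩
  filter_upwards [ae_lt_top' (hA_lsc.measurable.comp_aemeasurable hu) huA] with t ht
  obtain ⟨n, hn⟩ := ENNReal.exists_nat_gt ht.ne
  exact mem_iUnion.2 ⟨n, hn.le⟩

/-- Extension of the Aubin–Lions lemma, Rossi–Savaré: Let `Y` be a Banach
space, `𝒜 : Y → [0,∞]` lower semicontinuous with relatively compact sublevels, and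
`𝒲 : Y × Y → [0,∞]` lower semicontinuous such that `𝒲(u,ũ) = 0` with
`𝒜(u), 𝒜(ũ) < ∞` implies `u = ũ`. If `(U_k)` is a sequence of measurable functions
`(0,T) → Y` with `sup_k ∫₀^T 𝒜(U_k(t)) dt < ∞` and
`lim_{h→0⁺} sup_k ∫₀^{T−h} 𝒲(U_k(t+h),U_k(t)) dt = 0`, then a subsequence of `(U_k)`
converges in measure on `(0,T)` to a limit `U : (0,T) → Y`. -/
theorem aubin_lions_extension
    {Y : Type*} [NormedAddCommGroup Y] [NormedSpace ℝ Y] [CompleteSpace Y]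
    [MeasurableSpace Y] [BorelSpace Y]
    (T : ℝ) (hT : 0 < T)
    (A : Y → ℝ≥0∞) (hA_lsc : LowerSemicontinuous A)
    (hA_cpt : ∀ c : ℝ≥0∞, c ≠ ⊤ → IsCompact (closure {y : Y | A y ≤ c}))
    (W : Y × Y → ℝ≥0∞) (hW_lsc : LowerSemicontinuous W)
    (hW_sep : ∀ u v : Y, A u ≠ ⊤ → A v ≠ ⊤ → W (u, v) = 0 → u = v)
    (U : ℕ → ℝ → Y)
    (hU_meas : ∀ k, Measurable ((Ioo (0 : ℝ) T).restrict (U k)))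
    (hU_A : (⨆ k, ∫⁻ t in Ioo (0 : ℝ) T, A (U k t)) < ⊤)
    (hU_W : Tendsto
      (fun h : ℝ => ⨆ k, ∫⁻ t in Ioo (0 : ℝ) (T - h), W (U k (t + h), U k t))
      (𝓝[>] (0 : ℝ)) (𝓝 0)) :
    ∃ φ : ℕ → ℕ, StrictMono φ ∧ ∃ V : ℝ → Y,
      ∀ ε : ℝ, 0 < ε →
        Tendsto (fun k => volume {t | t ∈ Ioo (0 : ℝ) T ∧ ε < ‖U (φ k) t - V t‖})
          atTop (𝓝 0) := by
  have hU_A' : ∀ k, ∫⁻ t in Ioo (0 : ℝ) T, A (U k t) ≤ ⨆ k, ∫⁻ t in Ioo (0 : ℝ) T, A (U k t) :=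
    fun k => le_iSup (fun k => ∫⁻ t in Ioo (0 : ℝ) T, A (U k t)) k
  have hU : ∀ k, AEStronglyMeasurable (U k) (volume.restrict (Ioo 0 T)) := fun k =>
    aestronglyMeasurable_of_lintegral_ne_top hA_lsc hA_cpt
      (aemeasurable_restrict_of_measurable_subtype measurableSet_Ioo (hU_meas k))
      (ne_top_of_le_ne_top hU_A.ne (hU_A' k))
  choose g hg hUg using hU
  have hgA : ∀ k, ∫⁻ t in Ioo (0 : ℝ) T, A (g k t) ≤ ⨆ k, ∫⁻ t in Ioo (0 : ℝ) T, A (U k t) := by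
    refine fun k => le_of_eq_of_le (lintegral_congr_ae ?_) (hU_A' k)
    filter_upwards [hUg k] with t ht
    rw [ht]
  have hgW : Tendsto (fun h : ℝ => ⨆ k, ∫⁻ t in Ioo (0 : ℝ) (T - h), W (g k (t + h), g k t))
      (𝓝[>] (0 : ℝ)) (𝓝 0) := by
    refine hU_W.congr' ?_
    filter_upwards [self_mem_nhdsWithin] with h (hh : 0 < h)
    refine iSup_congr fun k => lintegral_congr_ae ?_
    have h1 := (ae_restrict_iff' measurableSet_Ioo).1 (hUg k)
    have h2 := (quasiMeasurePreserving_add_right (volume : Measure ℝ) h).ae h1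
    refine (ae_restrict_iff' measurableSet_Ioo).2 ?_
    filter_upwards [h1, h2] with t ht1 ht2 ht
    rw [ht1 ⟨ht.1, by linarith [ht.2]⟩, ht2 ⟨by linarith [ht.1], by linarith [ht.2]⟩]
  obtain ⟨φ, hφ, V, hV⟩ := exists_subseq_tendsto_ae_of_cauchy_in_measure
    (μ := volume.restrict (Ioo 0 T)) Nat.hyperfilter_le_atTop fun ε hε =>
      exists_mem_ultrafilter_cauchy_in_measure hT hA_lsc hA_cpt hW_lsc hW_sep hg hU_A.ne hgA hgW
        (hyperfilter ℕ) hε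
  refine ⟨φ, hφ, V, fun ε hε => ?_⟩
  have hmeas : TendstoInMeasure (volume.restrict (Ioo 0 T)) (fun n => U (φ n)) atTop V :=
    (tendstoInMeasure_of_tendsto_ae (fun n => (hg (φ n)).aestronglyMeasurable) hV).congr_left
      fun n => (hUg (φ n)).symm
  refine tendsto_of_tendsto_of_tendsto_of_le_of_le tendsto_const_nhds
    (tendstoInMeasure_iff_norm.1 hmeas ε hε) (fun _ => zero_le) fun n => ?_
  simp only [Measure.restrict_apply' measurableSet_Ioo]
  exact measure_mono fun t ht => ⟨ht.2.le, ht.1⟩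
end

section
/- (Local uniform convergence, case S = ∞.) Let S = ∞, let m satisfy (M) and (M-S), i.e. lim_{z→0⁺} m'(z)² f(z) = 0, and let (δ_k)_{k∈ℕ} be a vanishing sequence in (0, δ̄) with δ̄ < sup m. For each k define z_{δ_k} as the unique solution of m(z) = δ_k, m_{δ_k}(z) := m(z + z_{δ_k}) − δ_k, f_{δ_k}(z) := ∫₀^z √(2/m_{δ_k}(r)) dr, g_{δ_k} := f_{δ_k}^{−1}, and G_{δ_k} : [0,∞) → ℝ, G_{δ_k}(w) := m_{δ_k}'(g_{δ_k}(w)) √w. Then the map G : [0,∞) → ℝ defined by G(w) := m'(g(w)) √w for w > 0 and G(0) := 0 (with g := f^{−1}) is continuous, and there exists a subsequence of (G_{δ_k})_{k∈ℕ} that converges to G locally uniformly on [0,∞). -/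
open MeasureTheory Set Filter Topology

lemma integrableOn_sqrt_div (c x : ℝ) (hx : 0 ≤ x) :
    IntegrableOn (fun r : ℝ => Real.sqrt (c / r)) (Ioo 0 x) := by
  have h : IntegrableOn (fun r : ℝ => Real.sqrt c * r ^ (-(1 / 2) : ℝ)) (Ioo 0 x) := by
    have h1 := (intervalIntegral.intervalIntegrable_rpow' (a := 0) (b := x)
      (r := -(1 / 2)) (by norm_num)).const_mul (Real.sqrt c)
    rw [intervalIntegrable_iff_integrableOn_Ioo_of_le hx] at h1
    exact h1
  refine h.congr_fun (fun r hr => ?_) measurableSet_Ioo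
  beta_reduce
  rw [Real.sqrt_div' _ hr.1.le, Real.rpow_neg hr.1.le, ← Real.sqrt_eq_rpow, div_eq_mul_inv]

lemma setIntegral_sqrt_div (c x : ℝ) (hx : 0 ≤ x) :
    ∫ r in Ioo (0 : ℝ) x, Real.sqrt (c / r) = 2 * Real.sqrt c * Real.sqrt x := by
  have h : ∫ r in Ioo (0 : ℝ) x, Real.sqrt (c / r)
      = ∫ r in Ioo (0 : ℝ) x, Real.sqrt c * r ^ (-(1 / 2) : ℝ) := by
    refine setIntegral_congr_fun measurableSet_Ioo (fun r hr => ?_)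
    rw [Real.sqrt_div' _ hr.1.le, Real.rpow_neg hr.1.le, ← Real.sqrt_eq_rpow, div_eq_mul_inv]
  rw [h, ← integral_Ioc_eq_integral_Ioo, ← intervalIntegral.integral_of_le hx,
    intervalIntegral.integral_const_mul, integral_rpow (Or.inl (by norm_num)), Real.sqrt_eq_rpow x]
  norm_num
  ring

section LeftInverse

variable {φ g : ℝ → ℝ}

lemma integrableOn_of_leftInverse_setIntegral
    (hg : ∀ z : ℝ, 0 ≤ z → g (∫ r in Ioo (0 : ℝ) z, φ r) = z) {z : ℝ} (hz : 0 ≤ z) :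
    IntegrableOn φ (Ioo 0 z) := by
  by_contra hn
  have h1 := hg z hz
  have h0 := hg 0 le_rfl
  rw [integral_undef hn] at h1
  simp only [Ioo_self, Measure.restrict_empty, integral_zero_measure] at h0
  obtain rfl : z = 0 := h1.symm.trans h0
  exact hn (by simp)

lemma monotoneOn_setIntegral_of_leftInverse (hφ : ∀ r, 0 ≤ φ r)
    (hg : ∀ z : ℝ, 0 ≤ z → g (∫ r in Ioo (0 : ℝ) z, φ r) = z) :
    MonotoneOn (fun z : ℝ => ∫ r in Ioo (0 : ℝ) z, φ r) (Ici 0) := fun _ _ _ hb hab =>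
  setIntegral_mono_set (integrableOn_of_leftInverse_setIntegral hg hb)
    (Eventually.of_forall hφ) (Ioo_subset_Ioo_right hab).eventuallyLE

lemma strictMonoOn_setIntegral_of_leftInverse (hφ : ∀ r, 0 ≤ φ r)
    (hg : ∀ z : ℝ, 0 ≤ z → g (∫ r in Ioo (0 : ℝ) z, φ r) = z) :
    StrictMonoOn (fun z : ℝ => ∫ r in Ioo (0 : ℝ) z, φ r) (Ici 0) :=
  (monotoneOn_setIntegral_of_leftInverse hφ hg).strictMonoOn_of_injOn
    (fun _ ha _ hb hab => by
      have h := congrArg g hab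
      simpa only [hg _ ha, hg _ hb] using h)

end LeftInverse

/-- Pointwise convergence of monotone functions on `[0,∞)` to a strictly monotone one gives
continuous convergence of the inverses. -/
lemma tendsto_inverse_prod {f g : ℝ → ℝ} {F h : ℕ → ℝ → ℝ}
    (hf : StrictMonoOn f (Ici 0)) (hF : ∀ k, MonotoneOn (F k) (Ici 0))
    (hlim : ∀ z, 0 ≤ z → Tendsto (fun k => F k z) atTop (𝓝 (f z)))
    (hg : ∀ w, 0 ≤ w → 0 ≤ g w ∧ f (g w) = w)
    (hh : ∀ k w, 0 ≤ w → 0 ≤ h k w ∧ F k (h k w) = w) {w : ℝ} (hw : 0 ≤ w) :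
    Tendsto (fun q : ℕ × ℝ => h q.1 q.2) (atTop ×ˢ 𝓝[Ici 0] w) (𝓝 (g w)) := by
  have hs : Tendsto (fun q : ℕ × ℝ => q.2) (atTop ×ˢ 𝓝[Ici 0] w) (𝓝 w) :=
    tendsto_snd.mono_right nhdsWithin_le_nhds
  have hmem : ∀ᶠ q : ℕ × ℝ in atTop ×ˢ 𝓝[Ici 0] w, 0 ≤ q.2 :=
    tendsto_snd.eventually (self_mem_nhdsWithin (a := w) (s := Ici (0 : ℝ)))
  obtain ⟨hgw, hfg⟩ := hg w hw
  rw [tendsto_order]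
  constructor
  · intro a ha
    rcases lt_or_ge a 0 with ha0 | ha0
    · filter_upwards [hmem] with q hq using ha0.trans_le (hh q.1 q.2 hq).1
    · have hlt : f a < w := by simpa only [hfg] using hf ha0 hgw ha
      have h1 : Tendsto (fun q : ℕ × ℝ => F q.1 a) (atTop ×ˢ 𝓝[Ici 0] w) (𝓝 (f a)) :=
        (hlim a ha0).comp tendsto_fst
      filter_upwards [hmem, h1.eventually_lt hs hlt] with q hq hlt'
      by_contra! hcon
      have := hF q.1 (hh q.1 q.2 hq).1 ha0 hcon
      rw [(hh q.1 q.2 hq).2] at this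
      exact this.not_gt hlt'
  · intro b hb
    have hb0 : 0 ≤ b := hgw.trans hb.le
    have hlt : w < f b := by simpa only [hfg] using hf hgw hb0 hb
    have h1 : Tendsto (fun q : ℕ × ℝ => F q.1 b) (atTop ×ˢ 𝓝[Ici 0] w) (𝓝 (f b)) :=
      (hlim b hb0).comp tendsto_fst
    filter_upwards [hmem, hs.eventually_lt h1 hlt] with q hq hlt'
    by_contra! hcon
    have := hF q.1 hb0 (hh q.1 q.2 hq).1 hcon
    rw [(hh q.1 q.2 hq).2] at this
    exact this.not_gt hlt'

/-- Continuous convergence implies continuity of the limit and locally uniform convergence. -/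
lemma continuousOn_and_tendstoLocallyUniformlyOn_of_tendsto_prod {F : ℕ → ℝ → ℝ} {f : ℝ → ℝ}
    {s : Set ℝ} (h : ∀ x ∈ s,
      Tendsto (fun q : ℕ × ℝ => F q.1 q.2) (atTop ×ˢ 𝓝[s] x) (𝓝 (f x))) :
    ContinuousOn f s ∧ TendstoLocallyUniformlyOn F f atTop s := by
  have hpt : ∀ x ∈ s, Tendsto (fun k => F k x) atTop (𝓝 (f x)) := fun x hx =>
    (h x hx).comp (tendsto_id.prodMk
      (tendsto_const_pure.mono_right (pure_le_nhdsWithin hx)))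
  have hcont : ContinuousOn f s := by
    intro x hx
    refine Metric.tendsto_nhds.2 fun ε hε => ?_
    have h1 := (Metric.tendsto_nhds.1 (h x hx) (ε / 2) (half_pos hε))
    obtain ⟨pa, hpa, pb, hpb, hab⟩ := eventually_prod_iff.1 h1
    filter_upwards [hpb, self_mem_nhdsWithin] with y hy hys
    have h2 : dist (f y) (f x) ≤ ε / 2 := by
      refine le_of_tendsto ((hpt y hys).dist tendsto_const_nhds) ?_
      filter_upwards [hpa] with k hk using (hab hk hy).le
    linarith
  refine ⟨hcont, tendstoLocallyUniformlyOn_iff_filter.2 fun x hx => ?_⟩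
  rw [tendstoUniformlyOnFilter_iff_tendsto]
  have h2 : Tendsto (fun q : ℕ × ℝ => f q.2) (atTop ×ˢ 𝓝[s] x) (𝓝 (f x)) :=
    (hcont x hx).tendsto.comp tendsto_snd
  exact (h2.prodMk_nhds (h x hx)).mono_right (nhds_le_uniformity (f x))

section Concave

variable {m : ℝ → ℝ}

lemma hasDerivAt_of_contDiffOn_Ioi (hm : ContDiffOn ℝ 2 m (Ioi 0)) {z : ℝ} (hz : 0 < z) :
    HasDerivAt m (deriv m z) z :=
  ((hm.differentiableOn (by norm_num)).differentiableAt (Ioi_mem_nhds hz)).hasDerivAt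

lemma contDiffOn_deriv_Ioi (hm : ContDiffOn ℝ 2 m (Ioi 0)) :
    ContDiffOn ℝ 1 (deriv m) (Ioi 0) :=
  ((contDiffOn_succ_iff_deriv_of_isOpen (n := 1) isOpen_Ioi).1
    (by simpa [one_add_one_eq_two] using hm)).2.2

lemma antitoneOn_deriv_Ioi (hm : ContDiffOn ℝ 2 m (Ioi 0))
    (hconc : ∀ z : ℝ, 0 < z → deriv (deriv m) z ≤ 0) : AntitoneOn (deriv m) (Ioi 0) := by
  refine antitoneOn_of_deriv_nonpos (convex_Ioi 0) (contDiffOn_deriv_Ioi hm).continuousOn ?_ ?_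
  · rw [interior_Ioi]
    exact (contDiffOn_deriv_Ioi hm).differentiableOn (by norm_num)
  · rw [interior_Ioi]
    exact fun z hz => hconc z hz

lemma deriv_mul_sub_le_and_le (hm : ContDiffOn ℝ 2 m (Ioi 0))
    (hconc : ∀ z : ℝ, 0 < z → deriv (deriv m) z ≤ 0) {a b : ℝ} (ha : 0 < a) (hab : a ≤ b) :
    deriv m b * (b - a) ≤ m b - m a ∧ m b - m a ≤ deriv m a * (b - a) := by
  rcases hab.eq_or_lt with rfl | hab
  · simp
  have hpos : ∀ z ∈ Icc a b, 0 < z := fun z hz => ha.trans_le hz.1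
  obtain ⟨c, hc, hc'⟩ := exists_deriv_eq_slope m hab
    (fun z hz => (hasDerivAt_of_contDiffOn_Ioi hm (hpos z hz)).continuousAt.continuousWithinAt)
    (fun z hz => (hasDerivAt_of_contDiffOn_Ioi hm
      (hpos z (Ioo_subset_Icc_self hz))).differentiableAt.differentiableWithinAt)
  have hba : 0 < b - a := sub_pos.2 hab
  have hc0 : 0 < c := ha.trans hc.1
  have hanti := antitoneOn_deriv_Ioi hm hconc
  have e : m b - m a = deriv m c * (b - a) := by rw [hc', div_mul_cancel₀ _ hba.ne']
  rw [e]
  exact ⟨mul_le_mul_of_nonneg_right (hanti hc0 (ha.trans hab) hc.2.le) hba.le,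
    mul_le_mul_of_nonneg_right (hanti ha hc0 hc.1.le) hba.le⟩

lemma deriv_nonneg_of_pos (hm : ContDiffOn ℝ 2 m (Ioi 0))
    (hpos : ∀ z : ℝ, 0 < z → 0 < m z)
    (hconc : ∀ z : ℝ, 0 < z → deriv (deriv m) z ≤ 0) {z : ℝ} (hz : 0 < z) :
    0 ≤ deriv m z := by
  by_contra! hneg
  have hy : 0 ≤ m z / -deriv m z := div_nonneg (hpos z hz).le (by linarith)
  have h1 := (deriv_mul_sub_le_and_le hm hconc hz (le_add_of_nonneg_right hy)).2
  have h2 := hpos (z + m z / -deriv m z) (by linarith)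
  have h3 : deriv m z * (z + m z / -deriv m z - z) = -m z := by
    field_simp [hneg.ne]
    ring
  linarith

lemma monotoneOn_of_pos (hm : ContDiffOn ℝ 2 m (Ioi 0))
    (hpos : ∀ z : ℝ, 0 < z → 0 < m z)
    (hconc : ∀ z : ℝ, 0 < z → deriv (deriv m) z ≤ 0) : MonotoneOn m (Ioi 0) := by
  intro a ha b hb hab
  have h1 := (deriv_mul_sub_le_and_le hm hconc ha hab).1
  have h2 := mul_nonneg (deriv_nonneg_of_pos hm hpos hconc hb) (sub_nonneg.2 hab)
  linarith

lemma deriv_mul_le (hm : ContDiffOn ℝ 2 m (Ioi 0))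
    (hpos : ∀ z : ℝ, 0 < z → 0 < m z)
    (hconc : ∀ z : ℝ, 0 < z → deriv (deriv m) z ≤ 0) {x : ℝ} (hx : 0 < x) :
    deriv m x * x ≤ m x := by
  have ht : Tendsto (fun a : ℝ => deriv m x * (x - a)) (𝓝[>] 0) (𝓝 (deriv m x * (x - 0))) :=
    (Continuous.tendsto (by fun_prop) 0).mono_left nhdsWithin_le_nhds
  rw [sub_zero] at ht
  refine le_of_tendsto ht ?_
  filter_upwards [Ioo_mem_nhdsGT hx] with a ha
  have h1 := (deriv_mul_sub_le_and_le hm hconc ha.1 ha.2.le).1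
  have h2 := hpos a ha.1
  linarith

/-- Bounding the increment over `[z, z + b]` from below by linear interpolation. -/
lemma mul_le_mul_sub (hm : ContDiffOn ℝ 2 m (Ioi 0))
    (hconc : ∀ z : ℝ, 0 < z → deriv (deriv m) z ≤ 0) {z r b : ℝ} (hz : 0 < z) (hr : 0 ≤ r)
    (hrb : r ≤ b) : r * (m (b + z) - m z) ≤ b * (m (r + z) - m z) := by
  have h1 := (deriv_mul_sub_le_and_le hm hconc hz (show z ≤ r + z by linarith)).1
  have h2 := (deriv_mul_sub_le_and_le hm hconc (show 0 < r + z by linarith)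
    (show r + z ≤ b + z by linarith)).2
  have h3 : (b - r) * (deriv m (r + z) * r) ≤ (b - r) * (m (r + z) - m z) :=
    mul_le_mul_of_nonneg_left (by linarith) (by linarith)
  have h4 : r * (m (b + z) - m (r + z)) ≤ r * (deriv m (r + z) * (b - r)) :=
    mul_le_mul_of_nonneg_left (by linarith) hr
  linarith

lemma deriv_mul_sq_setIntegral_le (hm : ContDiffOn ℝ 2 m (Ioi 0))
    (hpos : ∀ z : ℝ, 0 < z → 0 < m z)
    (hconc : ∀ z : ℝ, 0 < z → deriv (deriv m) z ≤ 0) {z x : ℝ} (hz : 0 < z) (hx : 0 ≤ x) :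
    deriv m (x + z) * (∫ r in Ioo (0 : ℝ) x, Real.sqrt (2 / (m (r + z) - m z))) ^ 2 ≤ 8 * x := by
  have hxz : 0 < x + z := by linarith
  rcases (deriv_nonneg_of_pos hm hpos hconc hxz).eq_or_lt with h0 | hp
  · rw [← h0]
    linarith
  set p := deriv m (x + z)
  have hle : ∫ r in Ioo (0 : ℝ) x, Real.sqrt (2 / (m (r + z) - m z))
      ≤ ∫ r in Ioo (0 : ℝ) x, Real.sqrt (2 / p / r) := by
    refine integral_mono_of_nonneg (Eventually.of_forall fun r => Real.sqrt_nonneg _)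
      (integrableOn_sqrt_div _ _ hx) ?_
    filter_upwards [ae_restrict_mem measurableSet_Ioo] with r hr
    have hrz : 0 < r + z := by linarith [hr.1]
    have h1 := (deriv_mul_sub_le_and_le hm hconc hz (show z ≤ r + z by linarith [hr.1])).1
    have h2 : p ≤ deriv m (r + z) :=
      antitoneOn_deriv_Ioi hm hconc hrz hxz (by linarith [hr.2])
    have h3 := mul_le_mul_of_nonneg_right h2 hr.1.le
    rw [div_div]
    exact Real.sqrt_le_sqrt (div_le_div_of_nonneg_left (by norm_num) (mul_pos hp hr.1)
      (by linarith))
  rw [setIntegral_sqrt_div _ _ hx] at hle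
  have h0 : 0 ≤ ∫ r in Ioo (0 : ℝ) x, Real.sqrt (2 / (m (r + z) - m z)) :=
    integral_nonneg fun r => Real.sqrt_nonneg _
  calc p * (∫ r in Ioo (0 : ℝ) x, Real.sqrt (2 / (m (r + z) - m z))) ^ 2
      ≤ p * (2 * Real.sqrt (2 / p) * Real.sqrt x) ^ 2 := by gcongr
    _ = 8 * x := by
      rw [mul_pow, mul_pow, Real.sq_sqrt (by positivity), Real.sq_sqrt hx]
      field_simp
      ring

lemma tendsto_setIntegral_shift (hm : ContDiffOn ℝ 2 m (Ioi 0))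
    (hpos : ∀ z : ℝ, 0 < z → 0 < m z)
    (hconc : ∀ z : ℝ, 0 < z → deriv (deriv m) z ≤ 0) {δ zδ : ℕ → ℝ}
    (hδ0 : Tendsto δ atTop (𝓝 0)) (hz0 : Tendsto zδ atTop (𝓝 0))
    (hzδ : ∀ k, 0 < zδ k ∧ m (zδ k) = δ k) {b : ℝ} (hb : 0 ≤ b) :
    Tendsto (fun k => ∫ r in Ioo (0 : ℝ) b, Real.sqrt (2 / (m (r + zδ k) - δ k))) atTop
      (𝓝 (∫ r in Ioo (0 : ℝ) b, Real.sqrt (2 / m r))) := by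
  rcases hb.eq_or_lt with rfl | hb
  · simp
  have hlim : ∀ r, 0 < r → Tendsto (fun k => m (r + zδ k) - δ k) atTop (𝓝 (m r)) := by
    intro r hr
    have h1 : Tendsto (fun k => r + zδ k) atTop (𝓝 r) := by
      simpa using hz0.const_add r
    simpa using ((hasDerivAt_of_contDiffOn_Ioi hm hr).continuousAt.tendsto.comp h1).sub hδ0
  have hmb := hpos b hb
  refine tendsto_integral_filter_of_dominated_convergence
    (fun r => Real.sqrt (2 / (m b / 2 / b) / r)) ?_ ?_ (integrableOn_sqrt_div _ _ hb.le) ?_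
  · refine Eventually.of_forall fun k => ?_
    have hc : ContinuousOn (fun r => m (r + zδ k) - δ k) (Ioo 0 b) := by
      refine ContinuousOn.sub (hm.continuousOn.comp (by fun_prop) fun r hr => ?_)
        continuousOn_const
      exact add_pos hr.1 (hzδ k).1
    exact ((hc.aestronglyMeasurable measurableSet_Ioo).aemeasurable.const_div 2).sqrt
      |>.aestronglyMeasurable
  · filter_upwards [(hlim b hb).eventually_const_lt (half_lt_self hmb)] with k hk
    filter_upwards [ae_restrict_mem measurableSet_Ioo] with r hr
    rw [Real.norm_of_nonneg (Real.sqrt_nonneg _), div_div]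
    have h1 := mul_le_mul_sub hm hconc (hzδ k).1 hr.1.le hr.2.le
    rw [(hzδ k).2] at h1
    have hr0 := hr.1
    refine Real.sqrt_le_sqrt (div_le_div_of_nonneg_left (by norm_num) (by positivity) ?_)
    rw [div_mul_eq_mul_div, div_le_iff₀ hb]
    have h2 := mul_le_mul_of_nonneg_left hk.le hr0.le
    linarith
  · filter_upwards [ae_restrict_mem measurableSet_Ioo] with r hr
    exact (tendsto_const_nhds.div (hlim r hr.1) (hpos r hr.1).ne').sqrt

/-- The smallness condition on `m' ^ 2 * f` forces `m' z ^ 3 * z` to vanish at the origin. -/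
lemma tendsto_deriv_cube_mul (hm : ContDiffOn ℝ 2 m (Ioi 0))
    (hpos : ∀ z : ℝ, 0 < z → 0 < m z)
    (hconc : ∀ z : ℝ, 0 < z → deriv (deriv m) z ≤ 0)
    (hm0 : Tendsto m (𝓝[>] (0 : ℝ)) (𝓝 0))
    (hint : ∀ z : ℝ, 0 ≤ z → IntegrableOn (fun r => Real.sqrt (2 / m r)) (Ioo 0 z))
    (hMS : Tendsto
      (fun z : ℝ => (deriv m z) ^ 2 * ∫ r in Ioo (0 : ℝ) z, Real.sqrt (2 / m r))
      (𝓝[>] (0 : ℝ)) (𝓝 0)) :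
    Tendsto (fun z => deriv m z ^ 3 * z) (𝓝[>] (0 : ℝ)) (𝓝 0) := by
  have hmono := monotoneOn_of_pos hm hpos hconc
  have key : ∀ s, 0 < s → deriv m s ^ 2 * s ≤
      (deriv m s ^ 2 * ∫ r in Ioo (0 : ℝ) s, Real.sqrt (2 / m r)) * Real.sqrt (m s) := by
    intro s hs
    have hms := hpos s hs
    have h1 : s * Real.sqrt (2 / m s) ≤ ∫ r in Ioo (0 : ℝ) s, Real.sqrt (2 / m r) := by
      have h := setIntegral_mono_on (μ := volume) (f := fun _ => Real.sqrt (2 / m s))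
        (integrableOn_const (by simp)) (hint s hs.le) measurableSet_Ioo (fun r hr =>
          Real.sqrt_le_sqrt (div_le_div_of_nonneg_left (by norm_num) (hpos r hr.1)
            (hmono hr.1 hs hr.2.le)))
      simpa [hs.le] using h
    have h2 : 1 ≤ Real.sqrt (2 / m s) * Real.sqrt (m s) := by
      rw [← Real.sqrt_mul (by positivity), div_mul_cancel₀ _ hms.ne']
      exact Real.one_le_sqrt.2 (by norm_num)
    have h3 : s ≤ (∫ r in Ioo (0 : ℝ) s, Real.sqrt (2 / m r)) * Real.sqrt (m s) :=
      calc s ≤ s * (Real.sqrt (2 / m s) * Real.sqrt (m s)) := le_mul_of_one_le_right hs.le h2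
        _ = s * Real.sqrt (2 / m s) * Real.sqrt (m s) := by ring
        _ ≤ _ := mul_le_mul_of_nonneg_right h1 (Real.sqrt_nonneg _)
    rw [mul_assoc]
    exact mul_le_mul_of_nonneg_left h3 (sq_nonneg _)
  have bound : ∀ ε, 0 < ε → ∀ᶠ x in 𝓝[>] (0 : ℝ), deriv m x ^ 3 * x ≤ 16 * ε ^ 4 := by
    intro ε hε
    obtain ⟨η, hη, hηs⟩ := mem_nhdsGT_iff_exists_Ioo_subset.1
      (hMS.eventually_lt_const (show 0 < ε ^ 2 by positivity))
    filter_upwards [Ioo_mem_nhdsGT hη] with x hx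
    have hx0 : 0 < x := hx.1
    set c := Real.sqrt (Real.sqrt (m x)) with hc
    have hc0 : 0 < c := Real.sqrt_pos.2 (Real.sqrt_pos.2 (hpos x hx0))
    have hc2 : c ^ 2 = Real.sqrt (m x) := Real.sq_sqrt (Real.sqrt_nonneg _)
    have hc4 : c ^ 4 = m x := by
      rw [show c ^ 4 = (c ^ 2) ^ 2 by ring, hc2, Real.sq_sqrt (hpos x hx0).le]
    have hd : ∀ s ∈ Ioc 0 x, deriv m s ≤ 2 * ε * c * (1 / (2 * Real.sqrt s)) := by
      intro s hs
      have hs0 : 0 < s := hs.1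
      have hss : 0 < Real.sqrt s := Real.sqrt_pos.2 hs0
      have h1 : deriv m s ^ 2 * s ≤ ε ^ 2 * c ^ 2 := by
        rw [hc2]
        refine (key s hs0).trans (mul_le_mul (hηs ⟨hs0, hs.2.trans_lt hx.2⟩).le
          (Real.sqrt_le_sqrt (hmono hs0 hx0 hs.2)) (Real.sqrt_nonneg _) (by positivity))
      have h2 : deriv m s * Real.sqrt s ≤ ε * c := by
        refine le_of_sq_le_sq ?_ (by positivity)
        rw [mul_pow, mul_pow, Real.sq_sqrt hs0.le]
        exact h1
      rw [show 2 * ε * c * (1 / (2 * Real.sqrt s)) = ε * c / Real.sqrt s by field_simp,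
        le_div_iff₀ hss]
      exact h2
    have hder : ∀ s ∈ Ioc 0 x, HasDerivAt (fun s => m s - 2 * ε * c * Real.sqrt s)
        (deriv m s - 2 * ε * c * (1 / (2 * Real.sqrt s))) s := fun s hs =>
      (hasDerivAt_of_contDiffOn_Ioi hm hs.1).sub
        ((Real.hasDerivAt_sqrt hs.1.ne').const_mul _)
    have hanti : AntitoneOn (fun s => m s - 2 * ε * c * Real.sqrt s) (Ioc 0 x) := by
      refine antitoneOn_of_deriv_nonpos (convex_Ioc 0 x)
        (fun s hs => (hder s hs).continuousAt.continuousWithinAt)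
        (fun s hs => (hder s (interior_subset hs)).differentiableAt.differentiableWithinAt)
        (fun s hs => ?_)
      rw [(hder s (interior_subset hs)).deriv]
      exact sub_nonpos.2 (hd s (interior_subset hs))
    have hlim : Tendsto (fun s => m s - 2 * ε * c * Real.sqrt s) (𝓝[>] 0) (𝓝 0) := by
      have h1 : Tendsto (fun s : ℝ => 2 * ε * c * Real.sqrt s) (𝓝[>] 0) (𝓝 0) := by
        have := (Continuous.tendsto (f := fun s : ℝ => 2 * ε * c * Real.sqrt s)
          (by fun_prop) 0).mono_left (nhdsWithin_le_nhds (s := Ioi 0))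
        simpa using this
      simpa using hm0.sub h1
    have hmx : m x - 2 * ε * c * Real.sqrt x ≤ 0 := by
      refine ge_of_tendsto hlim ?_
      filter_upwards [Ioo_mem_nhdsGT hx0] with s hs
      exact hanti ⟨hs.1, hs.2.le⟩ ⟨hx0, le_rfl⟩ hs.2.le
    have hc3 : c ^ 3 ≤ 2 * ε * Real.sqrt x := by
      rw [← hc4] at hmx
      have h : c * c ^ 3 ≤ c * (2 * ε * Real.sqrt x) := by linarith
      exact le_of_mul_le_mul_left h hc0
    have hp := deriv_nonneg_of_pos hm hpos hconc hx0
    have hpx := deriv_mul_le hm hpos hconc hx0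
    have h12 : (deriv m x * x) ^ 3 ≤ 16 * ε ^ 4 * x ^ 2 :=
      calc (deriv m x * x) ^ 3 ≤ (c ^ 4) ^ 3 := by
            rw [hc4]
            exact pow_le_pow_left₀ (by positivity) hpx 3
        _ = (c ^ 3) ^ 4 := by ring
        _ ≤ (2 * ε * Real.sqrt x) ^ 4 := pow_le_pow_left₀ (by positivity) hc3 4
        _ = 16 * ε ^ 4 * (Real.sqrt x ^ 2) ^ 2 := by ring
        _ = 16 * ε ^ 4 * x ^ 2 := by rw [Real.sq_sqrt hx0.le]
    have hx2 : 0 < x ^ 2 := by positivity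
    refine le_of_mul_le_mul_right ?_ hx2
    calc deriv m x ^ 3 * x * x ^ 2 = (deriv m x * x) ^ 3 := by ring
      _ ≤ _ := h12
  have hε : Tendsto (fun ε : ℝ => 16 * ε ^ 4) (𝓝[>] 0) (𝓝 0) := by
    have := (Continuous.tendsto (f := fun ε : ℝ => 16 * ε ^ 4)
      (by fun_prop) 0).mono_left (nhdsWithin_le_nhds (s := Ioi 0))
    simpa using this
  rw [tendsto_order]
  constructor
  · intro a ha
    filter_upwards [self_mem_nhdsWithin] with x hx
    have hx0 : 0 < x := hx
    have := deriv_nonneg_of_pos hm hpos hconc hx0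
    exact ha.trans_le (by positivity)
  · intro b hb
    obtain ⟨ε, hεb, hε0⟩ := ((hε.eventually_lt_const hb).and self_mem_nhdsWithin).exists
    filter_upwards [bound ε hε0] with x hx using hx.trans_lt hεb

lemma tendsto_zero_of_tendsto_map_zero (hm : ContDiffOn ℝ 2 m (Ioi 0))
    (hpos : ∀ z : ℝ, 0 < z → 0 < m z)
    (hconc : ∀ z : ℝ, 0 < z → deriv (deriv m) z ≤ 0) {zδ : ℕ → ℝ} (hz : ∀ k, 0 < zδ k)
    (h : Tendsto (fun k => m (zδ k)) atTop (𝓝 0)) : Tendsto zδ atTop (𝓝 0) := by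
  rw [tendsto_order]
  refine ⟨fun a ha => Eventually.of_forall fun k => ha.trans (hz k), fun b hb => ?_⟩
  filter_upwards [h.eventually_lt_const (hpos b hb)] with k hk
  by_contra! hcon
  exact (monotoneOn_of_pos hm hpos hconc hb (hz k) hcon).not_gt hk

end Concave

/-- Local uniform convergence, case `S = ∞`: Let `m` satisfy (M) and
(M-S) (`lim_{z→0⁺} m'(z)² f(z) = 0`), `(δ_k)` a vanishing sequence in `(0,δ̄)` with
`δ̄ < sup m`, `z_{δ_k}` the unique solution of `m(z) = δ_k`,
`m_{δ_k}(z) := m(z + z_{δ_k}) − δ_k` (so `m_{δ_k}'(z) = m'(z + z_{δ_k})`),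
`f_{δ_k}(z) := ∫₀^z √(2/m_{δ_k}(r)) dr`, `g_{δ_k} := f_{δ_k}⁻¹`, `g := f⁻¹` and
`G_{δ_k}(w) := m_{δ_k}'(g_{δ_k}(w)) √w`. Then `G(w) := m'(g(w)) √w` (with `G(0) = 0`,
automatic since `√0 = 0`) is continuous on `[0,∞)` and a subsequence of `(G_{δ_k})`
converges to `G` locally uniformly on `[0,∞)`. -/
theorem G_converges_locally_uniformly
    (m : ℝ → ℝ)
    (hm_c2 : ContDiffOn ℝ 2 m (Ioi 0))
    (hm_pos : ∀ z : ℝ, 0 < z → 0 < m z)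
    (hm_conc : ∀ z : ℝ, 0 < z → deriv (deriv m) z ≤ 0)
    (hm0 : Tendsto m (𝓝[>] (0 : ℝ)) (𝓝 0))
    (hMS : Tendsto
      (fun z : ℝ => (deriv m z) ^ 2 * ∫ r in Ioo (0 : ℝ) z, Real.sqrt (2 / m r))
      (𝓝[>] (0 : ℝ)) (𝓝 0))
    (δbar : ℝ) (hδbar : 0 < δbar)
    (hδbarsup : ∃ z : ℝ, 0 < z ∧ δbar < m z)
    (δ : ℕ → ℝ) (hδmem : ∀ k, δ k ∈ Ioo (0 : ℝ) δbar)
    (hδ0 : Tendsto δ atTop (𝓝 0))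
    (zδ : ℕ → ℝ) (hzδ : ∀ k, 0 < zδ k ∧ m (zδ k) = δ k)
    (g : ℝ → ℝ)
    (hg_left : ∀ z : ℝ, 0 ≤ z →
      g (∫ r in Ioo (0 : ℝ) z, Real.sqrt (2 / m r)) = z)
    (hg_right : ∀ w : ℝ, 0 ≤ w → 0 ≤ g w ∧
      (∫ r in Ioo (0 : ℝ) (g w), Real.sqrt (2 / m r)) = w)
    (gδ : ℕ → ℝ → ℝ)
    (hgδ_left : ∀ k, ∀ z : ℝ, 0 ≤ z →
      gδ k (∫ r in Ioo (0 : ℝ) z, Real.sqrt (2 / (m (r + zδ k) - δ k))) = z)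
    (hgδ_right : ∀ k, ∀ w : ℝ, 0 ≤ w → 0 ≤ gδ k w ∧
      (∫ r in Ioo (0 : ℝ) (gδ k w), Real.sqrt (2 / (m (r + zδ k) - δ k))) = w) :
    ContinuousOn (fun w : ℝ => deriv m (g w) * Real.sqrt w) (Ici 0) ∧
    ∃ φ : ℕ → ℕ, StrictMono φ ∧
      TendstoLocallyUniformlyOn
        (fun k (w : ℝ) => deriv m (gδ (φ k) w + zδ (φ k)) * Real.sqrt w)
        (fun w : ℝ => deriv m (g w) * Real.sqrt w) atTop (Ici 0) := by
  have hz0 : Tendsto zδ atTop (𝓝 0) :=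
    tendsto_zero_of_tendsto_map_zero hm_c2 hm_pos hm_conc (fun k => (hzδ k).1)
      (by simpa only [(hzδ _).2] using hδ0)
  have hgk : ∀ w, 0 ≤ w →
      Tendsto (fun q : ℕ × ℝ => gδ q.1 q.2) (atTop ×ˢ 𝓝[Ici 0] w) (𝓝 (g w)) := fun w hw =>
    tendsto_inverse_prod
      (strictMonoOn_setIntegral_of_leftInverse (fun r => Real.sqrt_nonneg _) hg_left)
      (fun k => monotoneOn_setIntegral_of_leftInverse (fun r => Real.sqrt_nonneg _)
        (hgδ_left k))
      (fun z hz => tendsto_setIntegral_shift hm_c2 hm_pos hm_conc hδ0 hz0 hzδ hz)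
      hg_right hgδ_right hw
  have hsum : ∀ w, 0 ≤ w → Tendsto (fun q : ℕ × ℝ => gδ q.1 q.2 + zδ q.1)
      (atTop ×ˢ 𝓝[Ici 0] w) (𝓝 (g w)) := fun w hw => by
    simpa using (hgk w hw).add (hz0.comp tendsto_fst)
  have hsqrt : ∀ w : ℝ, Tendsto (fun q : ℕ × ℝ => Real.sqrt q.2)
      (atTop ×ˢ 𝓝[Ici 0] w) (𝓝 (Real.sqrt w)) := fun w =>
    (tendsto_snd.mono_right nhdsWithin_le_nhds).sqrt
  have hmem : ∀ w : ℝ, ∀ᶠ q : ℕ × ℝ in atTop ×ˢ 𝓝[Ici 0] w, 0 ≤ q.2 := fun w =>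
    tendsto_snd.eventually (self_mem_nhdsWithin (a := w) (s := Ici (0 : ℝ)))
  have hg0 : g 0 = 0 := by simpa using hg_left 0 le_rfl
  have main := continuousOn_and_tendstoLocallyUniformlyOn_of_tendsto_prod
    (F := fun k (w : ℝ) => deriv m (gδ k w + zδ k) * Real.sqrt w)
    (f := fun w : ℝ => deriv m (g w) * Real.sqrt w) (s := Ici 0) ?_
  · exact ⟨main.1, id, strictMono_id, main.2⟩
  intro w hw
  rcases (show (0 : ℝ) ≤ w from hw).eq_or_lt with rfl | hw
  · simp only [Real.sqrt_zero, mul_zero]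
    have hpos : ∀ᶠ q : ℕ × ℝ in atTop ×ˢ 𝓝[Ici 0] (0 : ℝ),
        gδ q.1 q.2 + zδ q.1 ∈ Ioi (0 : ℝ) := by
      filter_upwards [hmem 0] with q hq
      exact add_pos_of_nonneg_of_pos (hgδ_right q.1 q.2 hq).1 (hzδ q.1).1
    have hy : Tendsto (fun q : ℕ × ℝ => gδ q.1 q.2 + zδ q.1)
        (atTop ×ˢ 𝓝[Ici 0] 0) (𝓝[>] 0) :=
      tendsto_nhdsWithin_iff.2 ⟨by simpa only [hg0] using hsum 0 le_rfl, hpos⟩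
    have hcube := ((tendsto_deriv_cube_mul hm_c2 hm_pos hm_conc hm0
      (fun z hz => integrableOn_of_leftInverse_setIntegral hg_left hz) hMS).comp hy).const_mul 8
    rw [mul_zero] at hcube
    have hfour : Tendsto
        (fun q : ℕ × ℝ => (deriv m (gδ q.1 q.2 + zδ q.1) * Real.sqrt q.2) ^ 4)
        (atTop ×ˢ 𝓝[Ici 0] 0) (𝓝 0) := by
      refine squeeze_zero' (Eventually.of_forall fun q => by positivity) ?_ hcube
      filter_upwards [hmem 0, hpos] with q hq hq'
      obtain ⟨hx, hxw⟩ := hgδ_right q.1 q.2 hq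
      have h1 := deriv_mul_sq_setIntegral_le hm_c2 hm_pos hm_conc (hzδ q.1).1 hx
      rw [(hzδ q.1).2, hxw] at h1
      have hp := deriv_nonneg_of_pos hm_c2 hm_pos hm_conc hq'
      simp only [Function.comp_apply]
      set p := deriv m (gδ q.1 q.2 + zδ q.1)
      calc (p * Real.sqrt q.2) ^ 4 = p ^ 3 * (p * (Real.sqrt q.2 ^ 2) ^ 2) := by ring
        _ = p ^ 3 * (p * q.2 ^ 2) := by rw [Real.sq_sqrt hq]
        _ ≤ p ^ 3 * (8 * (gδ q.1 q.2 + zδ q.1)) := by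
          refine mul_le_mul_of_nonneg_left ?_ (pow_nonneg hp 3)
          linarith [(hzδ q.1).1]
        _ = 8 * (p ^ 3 * (gδ q.1 q.2 + zδ q.1)) := by ring
    have hroot := hfour.sqrt.sqrt
    simp only [Real.sqrt_zero] at hroot
    refine hroot.congr' ?_
    filter_upwards [hpos] with q hq'
    have hp := deriv_nonneg_of_pos hm_c2 hm_pos hm_conc hq'
    have ht : 0 ≤ deriv m (gδ q.1 q.2 + zδ q.1) * Real.sqrt q.2 :=
      mul_nonneg hp (Real.sqrt_nonneg _)
    generalize deriv m (gδ q.1 q.2 + zδ q.1) * Real.sqrt q.2 = t at ht ⊢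
    rw [show t ^ 4 = (t ^ 2) ^ 2 by ring, Real.sqrt_sq (by positivity), Real.sqrt_sq ht]
  · have hgw : 0 < g w := by
      obtain ⟨h1, h2⟩ := hg_right w hw.le
      refine h1.lt_of_ne fun h0 => hw.ne ?_
      rw [← h0] at h2
      simpa using h2
    have hcont : ContinuousAt (deriv m) (g w) :=
      (contDiffOn_deriv_Ioi hm_c2).continuousOn.continuousAt (Ioi_mem_nhds hgw)
    exact (hcont.tendsto.comp (hsum w hw.le)).mul (hsqrt w)
end

section
/- (Uniform convergence, case S < ∞.) Let S ∈ (0,∞), let m satisfy (M) and (M-S), i.e. lim_{z→0⁺} m'(z)² f(z) = 0 and lim_{z→S⁻} m'(z)² (f(S) − f(z)) = 0, and let (δ_k)_{k∈ℕ} be a vanishing sequence in (0, δ̄) with δ̄ < max m. For each k let z_{δ_k,1} < z_{δ_k,2} denote the two solutions of m(z) = δ_k, and define m_{δ_k}(z) := m(z_{δ_k,1} + (z_{δ_k,2} − z_{δ_k,1}) z / S) − δ_k for z ∈ (0,S), f_{δ_k}(z) := ∫₀^z √(2/m_{δ_k}(r)) dr, g_{δ_k} := f_{δ_k}^{−1},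 and G̃_{δ_k} : [0, f(S)] → ℝ, G̃_{δ_k}(w) := m_{δ_k}'(g_{δ_k}(w)) √(w (f_{δ_k}(S) − w)). Then the map G̃ : [0, f(S)] → ℝ defined by G̃(w) := m'(g(w)) √(w (f(S) − w)) for w ∈ (0, f(S)), G̃(0) := 0, G̃(f(S)) := 0 (with g := f^{−1}) is continuous, and there exists a subsequence of (G̃_{δ_k})_{k∈ℕ} that converges to G̃ uniformly on [0, f(S)]. -/
open MeasureTheory Set Filter Topology

/-- Inverses of uniformly converging strictly increasing functions converge jointly. -/
lemma tendsto_inverse_of_uniform {ι : Type*} {l : Filter ι} {S : ℝ} {F : ℝ → ℝ}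
    {Fk : ι → ℝ → ℝ} {g : ℝ → ℝ} {gk : ι → ℝ → ℝ} {ρ : ι → ℝ}
    (hF : StrictMonoOn F (Icc 0 S)) (hρ : Tendsto ρ l (𝓝 0))
    (hle : ∀ᶠ k in l, F S ≤ Fk k S ∧ ∀ x ∈ Icc 0 S, |Fk k x - F x| ≤ ρ k)
    (hg : ∀ w ∈ Icc 0 (F S), g w ∈ Icc 0 S ∧ F (g w) = w)
    (hgk : ∀ k, ∀ w ∈ Icc 0 (Fk k S), gk k w ∈ Icc 0 S ∧ Fk k (gk k w) = w)
    {w : ℝ} (hw : w ∈ Icc 0 (F S)) :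
    Tendsto (fun p : ι × ℝ => gk p.1 p.2) (l ×ˢ 𝓝[Icc 0 (F S)] w) (𝓝 (g w)) := by
  have hmem : ∀ᶠ p : ι × ℝ in l ×ˢ 𝓝[Icc 0 (F S)] w,
      gk p.1 p.2 ∈ Icc 0 S ∧ |p.2 - F (gk p.1 p.2)| ≤ ρ p.1 := by
    filter_upwards [hle.prod_mk (self_mem_nhdsWithin (a := w) (s := Icc 0 (F S)))] with p hp
    obtain ⟨⟨h1, h2⟩, h3⟩ := hp
    obtain ⟨h4, h5⟩ := hgk p.1 p.2 ⟨h3.1, h3.2.trans h1⟩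
    refine ⟨h4, ?_⟩
    have := h2 _ h4
    rwa [h5] at this
  have hconv : Tendsto (fun p : ι × ℝ => F (gk p.1 p.2)) (l ×ˢ 𝓝[Icc 0 (F S)] w) (𝓝 w) := by
    have h1 : Tendsto (fun p : ι × ℝ => p.2) (l ×ˢ 𝓝[Icc 0 (F S)] w) (𝓝 w) :=
      tendsto_snd.mono_right nhdsWithin_le_nhds
    have h2 : Tendsto (fun p : ι × ℝ => p.2 - F (gk p.1 p.2))
        (l ×ˢ 𝓝[Icc 0 (F S)] w) (𝓝 0) :=
      squeeze_zero_norm' (hmem.mono fun p hp => hp.2) (hρ.comp tendsto_fst)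
    simpa using h1.sub h2
  obtain ⟨hx, hFx⟩ := hg w hw
  refine tendsto_order.2 ⟨fun a ha => ?_, fun a ha => ?_⟩
  · by_cases ha0 : a < 0
    · exact hmem.mono fun p hp => ha0.trans_le hp.1.1
    · have haI : a ∈ Icc 0 S := ⟨not_lt.1 ha0, ha.le.trans hx.2⟩
      have : F a < w := by rw [← hFx]; exact hF haI hx ha
      filter_upwards [hmem, hconv.eventually_const_lt this] with p hp h
      exact (hF.lt_iff_lt haI hp.1).1 h
  · by_cases haS : S < a
    · exact hmem.mono fun p hp => hp.1.2.trans_lt haS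
    · have haI : a ∈ Icc 0 S := ⟨hx.1.trans ha.le, not_lt.1 haS⟩
      have : w < F a := by rw [← hFx]; exact hF hx haI ha
      filter_upwards [hmem, hconv.eventually_lt_const this] with p hp h
      exact (hF.lt_iff_lt hp.1 haI).1 h

/-- Joint convergence of `w ↦ d_k (g_k w) √(w (F_k S - w))`, where `g_k` inverts `F_k`. -/
lemma tendsto_deriv_comp_inverse_mul_sqrt {ι : Type*} {l : Filter ι} {S : ℝ} (hS : 0 < S)
    {F : ℝ → ℝ} {Fk : ι → ℝ → ℝ} {d : ℝ → ℝ} {dk : ι → ℝ → ℝ}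
    {g : ℝ → ℝ} {gk : ι → ℝ → ℝ} {ρ : ι → ℝ}
    (hF0 : F 0 = 0) (hF : StrictMonoOn F (Icc 0 S)) (hρ : Tendsto ρ l (𝓝 0))
    (hle : ∀ᶠ k in l, F S ≤ Fk k S ∧ ∀ x ∈ Icc 0 S, |Fk k x - F x| ≤ ρ k)
    (hg : ∀ w ∈ Icc 0 (F S), g w ∈ Icc 0 S ∧ F (g w) = w)
    (hgk : ∀ k, ∀ w ∈ Icc 0 (Fk k S), gk k w ∈ Icc 0 S ∧ Fk k (gk k w) = w)
    (hd : ∀ x ∈ Ioo 0 S, Tendsto (fun p : ι × ℝ => dk p.1 p.2) (l ×ˢ 𝓝 x) (𝓝 (d x)))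
    (hl : Tendsto (fun p : ι × ℝ => dk p.1 p.2 ^ 2 * Fk p.1 p.2) (l ×ˢ 𝓝[≥] 0) (𝓝 0))
    (hr : Tendsto (fun p : ι × ℝ => dk p.1 p.2 ^ 2 * (Fk p.1 S - Fk p.1 p.2))
      (l ×ˢ 𝓝[≤] S) (𝓝 0))
    {w : ℝ} (hw : w ∈ Icc 0 (F S)) :
    Tendsto (fun p : ι × ℝ => dk p.1 (gk p.1 p.2) * √(p.2 * (Fk p.1 S - p.2)))
      (l ×ˢ 𝓝[Icc 0 (F S)] w) (𝓝 (d (g w) * √(w * (F S - w)))) := by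
  have hgt := tendsto_inverse_of_uniform hF hρ hle hg hgk hw
  set L := l ×ˢ 𝓝[Icc 0 (F S)] w with hL
  have hfst : Tendsto (fun p : ι × ℝ => p.1) L l := tendsto_fst
  have hsnd : Tendsto (fun p : ι × ℝ => p.2) L (𝓝 w) :=
    tendsto_snd.mono_right nhdsWithin_le_nhds
  have hFS : Tendsto (fun p : ι × ℝ => Fk p.1 S) L (𝓝 (F S)) := by
    have h1 : Tendsto (fun k => Fk k S - F S) l (𝓝 0) :=
      squeeze_zero_norm' (hle.mono fun k hk => hk.2 S (right_mem_Icc.2 hS.le)) hρ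
    have h2 := h1.add_const (F S)
    simp only [sub_add_cancel, zero_add] at h2
    exact h2.comp hfst
  have hinv : ∀ᶠ p in L, p.2 ∈ Icc 0 (Fk p.1 S) ∧ gk p.1 p.2 ∈ Icc 0 S ∧
      Fk p.1 (gk p.1 p.2) = p.2 := by
    filter_upwards [hle.prod_mk (self_mem_nhdsWithin (a := w) (s := Icc 0 (F S)))] with p hp
    have : p.2 ∈ Icc 0 (Fk p.1 S) := ⟨hp.2.1, hp.2.2.trans hp.1.1⟩
    exact ⟨this, hgk p.1 p.2 this⟩
  obtain ⟨hx, hFx⟩ := hg w hw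
  have hsq : Tendsto (fun p : ι × ℝ => (dk p.1 (gk p.1 p.2)) ^ 2 * (p.2 * (Fk p.1 S - p.2)))
      L (𝓝 0) → w * (F S - w) = 0 → Tendsto (fun p : ι × ℝ =>
        dk p.1 (gk p.1 p.2) * √(p.2 * (Fk p.1 S - p.2))) L
        (𝓝 (d (g w) * √(w * (F S - w)))) := by
    intro h h0
    rw [h0, Real.sqrt_zero, mul_zero]
    rw [tendsto_zero_iff_abs_tendsto_zero]
    have h' := h.sqrt
    rw [Real.sqrt_zero] at h'
    refine h'.congr fun p => ?_
    rw [Real.sqrt_mul (sq_nonneg _), Real.sqrt_sq_eq_abs, Function.comp_apply, abs_mul,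
      abs_of_nonneg (Real.sqrt_nonneg _)]
  have h0I : (0 : ℝ) ∈ Icc 0 S := left_mem_Icc.2 hS.le
  have hSI : S ∈ Icc 0 S := right_mem_Icc.2 hS.le
  rcases hx.1.eq_or_lt with hx0 | hx0
  · have hw0 : w = 0 := by rw [← hFx, ← hx0, hF0]
    refine hsq ?_ (by rw [hw0, zero_mul])
    have hg' : Tendsto (fun p : ι × ℝ => (p.1, gk p.1 p.2)) L (l ×ˢ 𝓝[≥] 0) := by
      refine hfst.prodMk (tendsto_nhdsWithin_iff.2 ⟨?_, hinv.mono fun p hp => hp.2.1.1⟩)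
      rwa [← hx0] at hgt
    have := (hl.comp hg').mul (hFS.sub hsnd)
    rw [zero_mul] at this
    refine this.congr' (hinv.mono fun p hp => ?_)
    simp only [Function.comp_apply, hp.2.2]
    ring
  rcases hx.2.eq_or_lt with hxS | hxS
  · have hwS : w = F S := by rw [← hFx, hxS]
    refine hsq ?_ (by rw [hwS, sub_self, mul_zero])
    have hg' : Tendsto (fun p : ι × ℝ => (p.1, gk p.1 p.2)) L (l ×ˢ 𝓝[≤] S) := by
      refine hfst.prodMk (tendsto_nhdsWithin_iff.2 ⟨?_, hinv.mono fun p hp => hp.2.1.2⟩)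
      rwa [hxS] at hgt
    have := (hr.comp hg').mul hsnd
    rw [zero_mul] at this
    refine this.congr' (hinv.mono fun p hp => ?_)
    simp only [Function.comp_apply, hp.2.2]
    ring
  · exact ((hd _ ⟨hx0, hxS⟩).comp (hfst.prodMk hgt)).mul (hsnd.mul (hFS.sub hsnd)).sqrt

/-- On a compact set, joint convergence to a continuous limit is uniform convergence. -/
lemma tendstoUniformlyOn_of_tendsto_prod {ι : Type*} {l : Filter ι} {K : Set ℝ}
    (hK : IsCompact K) {G : ℝ → ℝ} {Gk : ι → ℝ → ℝ} (hG : ContinuousOn G K)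
    (h : ∀ w ∈ K, Tendsto (fun p : ι × ℝ => Gk p.1 p.2) (l ×ˢ 𝓝[K] w) (𝓝 (G w))) :
    TendstoUniformlyOn Gk G l K := by
  rw [← tendstoLocallyUniformlyOn_iff_tendstoUniformlyOn_of_compact hK,
    tendstoLocallyUniformlyOn_iff_forall_tendsto]
  intro w hw
  have h1 : Tendsto (fun p : ι × ℝ => G p.2) (l ×ˢ 𝓝[K] w) (𝓝 (G w)) :=
    Tendsto.comp (hG w hw) tendsto_snd
  exact (h1.prodMk_nhds (h w hw)).mono_right (nhds_le_uniformity _)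

/-- Growth bound at the left boundary point: `p = m'` with `p² y √(2/m) → 0` forces
`p³ y → 0`. -/
lemma tendsto_cube_mul_of_tendsto {m p : ℝ → ℝ} {a : ℝ} (ha : 0 < a)
    (hd : ∀ y ∈ Ioo 0 a, HasDerivAt m (p y) y) (hm : ∀ y ∈ Ioo 0 a, 0 < m y)
    (hm0 : Tendsto m (𝓝[>] 0) (𝓝 0)) (hp : ∀ y ∈ Ioo 0 a, 0 < p y)
    (hpm : ∀ y ∈ Ioo 0 a, p y * y ≤ m y)
    (h : Tendsto (fun y => p y ^ 2 * (y * √(2 / m y))) (𝓝[>] 0) (𝓝 0)) :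
    Tendsto (fun y => p y ^ 3 * y) (𝓝[>] 0) (𝓝 0) := by
  have key : ∀ κ > 0, ∀ᶠ y in 𝓝[>] (0 : ℝ), p y ^ 3 * y ≤ (3 * κ) ^ 4 := by
    intro κ hκ
    have hev : ∀ᶠ y in 𝓝[>] (0 : ℝ), y ∈ Ioo 0 a ∧ p y ^ 2 * (y * √(2 / m y)) < κ ^ 2 :=
      Filter.Eventually.and (Ioo_mem_nhdsGT ha) (h.eventually_lt_const (by positivity))
    obtain ⟨b, hb0, hb⟩ := mem_nhdsGT_iff_exists_Ioo_subset.1 hev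
    have hb0 : 0 < b := hb0
    -- with `q = m ^ (1/4)`, the derivative of `q ^ 3` is at most a multiple of that of `√y`
    set q : ℝ → ℝ := fun y => √√(m y) with hq
    have hqd : ∀ y ∈ Ioo 0 b, 0 < q y ∧ m y = q y ^ 4 ∧
        HasDerivAt q (p y / (4 * q y ^ 3)) y := by
      intro y hy
      have hya := (hb hy).1
      have hmy := hm y hya
      have h1 : 0 < √(m y) := Real.sqrt_pos.2 hmy
      have h2 : 0 < q y := Real.sqrt_pos.2 h1
      have h3 : √(m y) = q y ^ 2 := (Real.sq_sqrt h1.le).symm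
      refine ⟨h2, ?_, ?_⟩
      · rw [← Real.sq_sqrt hmy.le, h3]; ring
      · have h4 := ((hd y hya).sqrt hmy.ne').sqrt h1.ne'
        convert h4 using 1
        change _ = _ / (2 * q y)
        rw [h3]
        field_simp
        ring
    have hder : ∀ y ∈ Ioo 0 b, HasDerivAt (fun y => q y ^ 3 - 3 * κ * √y)
        (3 * q y ^ 2 * (p y / (4 * q y ^ 3)) - 3 * κ * (1 / (2 * √y))) y := by
      intro y hy
      have h1 := (hqd y hy).2.2.pow 3
      have h2 := (Real.hasDerivAt_sqrt hy.1.ne').const_mul (3 * κ)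
      exact (h1.sub h2).congr_deriv (by norm_num)
    have hanti : AntitoneOn (fun y => q y ^ 3 - 3 * κ * √y) (Ioo 0 b) := by
      apply antitoneOn_of_deriv_nonpos (convex_Ioo 0 b)
      · exact fun y hy => (hder y hy).continuousAt.continuousWithinAt
      · rw [interior_Ioo]
        exact fun y hy => (hder y hy).differentiableAt.differentiableWithinAt
      · rw [interior_Ioo]
        intro y hy
        rw [(hder y hy).deriv, sub_nonpos]
        obtain ⟨hq0, hmq, -⟩ := hqd y hy
        obtain ⟨hya, hκy⟩ := hb hy
        have hs : 0 < √y := Real.sqrt_pos.2 hy.1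
        have hs2 : y = √y ^ 2 := (Real.sq_sqrt hy.1.le).symm
        have hpy := hp y hya
        have h1 : √(2 / m y) ≥ 1 / q y ^ 2 := by
          apply Real.le_sqrt_of_sq_le
          rw [hmq, div_pow, one_pow, ← pow_mul]
          gcongr
          norm_num
        have h2 : p y * √y ≤ κ * q y := by
          have h3 : (p y * √y) ^ 2 ≤ (κ * q y) ^ 2 := by
            have h4 : p y ^ 2 * (y * (1 / q y ^ 2)) ≤ κ ^ 2 :=
              le_trans (by have := hy.1; gcongr) hκy.le
            rw [mul_pow, mul_pow, ← hs2]
            rwa [← mul_assoc, mul_one_div, div_le_iff₀ (by positivity)] at h4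
          exact (pow_le_pow_iff_left₀ (by positivity) (by positivity) two_ne_zero).1 h3
        rw [show 3 * q y ^ 2 * (p y / (4 * q y ^ 3)) = 3 * p y / (4 * q y) by field_simp,
          mul_one_div, div_le_div_iff₀ (by positivity) (by positivity)]
        nlinarith [mul_pos hκ hq0]
    have hlim : Tendsto (fun y => q y ^ 3 - 3 * κ * √y) (𝓝[>] 0) (𝓝 0) := by
      have h1 : Tendsto q (𝓝[>] 0) (𝓝 0) := by simpa [hq] using hm0.sqrt.sqrt
      have h2 : Tendsto (fun y : ℝ => √y) (𝓝[>] 0) (𝓝 0) := by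
        simpa using (Real.continuous_sqrt.tendsto 0).mono_left nhdsWithin_le_nhds
      simpa using (h1.pow 3).sub (h2.const_mul (3 * κ))
    filter_upwards [Ioo_mem_nhdsGT hb0] with y hy
    have hle : q y ^ 3 - 3 * κ * √y ≤ 0 := by
      refine ge_of_tendsto hlim ?_
      filter_upwards [Ioo_mem_nhdsGT hy.1] with e he
      exact hanti ⟨he.1, he.2.trans hy.2⟩ hy he.2.le
    obtain ⟨hq0, hmq, -⟩ := hqd y hy
    have hya := (hb hy).1
    have hy0 := hy.1
    have hpy := hp y hya
    have h4 : √y ^ 4 = y ^ 2 := by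
      rw [show (4 : ℕ) = 2 * 2 from rfl, pow_mul, Real.sq_sqrt hy.1.le]
    have h5 : (q y ^ 3) ^ 4 ≤ (3 * κ * √y) ^ 4 :=
      pow_le_pow_left₀ (by positivity) (by linarith) 4
    have h6 : (p y * y) ^ 3 ≤ m y ^ 3 := pow_le_pow_left₀ (by positivity) (hpm y hya) 3
    have h7 : (p y ^ 3 * y) * y ^ 2 ≤ (3 * κ) ^ 4 * y ^ 2 := by
      calc (p y ^ 3 * y) * y ^ 2 = (p y * y) ^ 3 := by ring
        _ ≤ m y ^ 3 := h6
        _ = (q y ^ 3) ^ 4 := by rw [hmq]; ring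
        _ ≤ (3 * κ * √y) ^ 4 := h5
        _ = (3 * κ) ^ 4 * y ^ 2 := by rw [mul_pow, h4]
    exact le_of_mul_le_mul_right h7 (by positivity)
  have hnn : ∀ᶠ y in 𝓝[>] (0 : ℝ), 0 ≤ p y ^ 3 * y := by
    filter_upwards [Ioo_mem_nhdsGT ha] with y hy
    have := hp y hy
    have := hy.1
    positivity
  refine tendsto_order.2 ⟨fun c hc => hnn.mono fun y hy => hc.trans_le hy, fun c hc => ?_⟩
  obtain ⟨κ, hκ, hκc⟩ : ∃ κ > 0, (3 * κ) ^ 4 < c := by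
    have h1 : Tendsto (fun κ : ℝ => (3 * κ) ^ 4) (𝓝[>] 0) (𝓝 0) := by
      have : Continuous fun κ : ℝ => (3 * κ) ^ 4 := by fun_prop
      simpa using (this.tendsto 0).mono_left nhdsWithin_le_nhds
    obtain ⟨κ, h2, h3⟩ := ((h1.eventually_lt_const hc).and self_mem_nhdsWithin).exists
    exact ⟨κ, h3, h2⟩
  exact (key κ hκ).mono fun y hy => hy.trans_lt hκc

lemma ConcaveOn.div_mul_le {h : ℝ → ℝ} {S r x : ℝ} (hc : ConcaveOn ℝ (Icc 0 S) h)
    (h0 : h 0 = 0) (hr : 0 ≤ r) (hrx : r ≤ x) (hx : 0 < x) (hxS : x ≤ S) :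
    r / x * h x ≤ h r := by
  have hle : r / x ≤ 1 := (div_le_one hx).2 hrx
  have := hc.2 ⟨le_rfl, hx.le.trans hxS⟩ ⟨hx.le, hxS⟩ (sub_nonneg.2 hle)
    (div_nonneg hr hx.le) (by ring)
  simpa [h0, div_mul_cancel₀ _ hx.ne'] using this

lemma ConcaveOn.comp_const_sub {h : ℝ → ℝ} {S : ℝ} (hc : ConcaveOn ℝ (Icc 0 S) h) :
    ConcaveOn ℝ (Icc 0 S) fun x => h (S - x) := by
  refine ⟨convex_Icc 0 S, fun x hx y hy a b ha hb hab => ?_⟩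
  have := hc.2 (x := S - x) (y := S - y) ⟨by linarith [hx.2], by linarith [hx.1]⟩
    ⟨by linarith [hy.2], by linarith [hy.1]⟩ ha hb hab
  have heq : a • (S - x) + b • (S - y) = S - (a • x + b • y) := by
    simp only [smul_eq_mul]
    linear_combination S * hab
  rwa [heq] at this

lemma ConcaveOn.div_mul_le_right {h : ℝ → ℝ} {S r x : ℝ} (hc : ConcaveOn ℝ (Icc 0 S) h)
    (hS : h S = 0) (hx : 0 ≤ x) (hxr : x ≤ r) (hr : r ≤ S) (hxS : x < S) :
    (S - r) / (S - x) * h x ≤ h r := by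
  simpa using hc.comp_const_sub.div_mul_le (by simpa using hS) (r := S - r) (x := S - x)
    (by linarith) (by linarith) (by linarith) (by linarith)

lemma sqrt_two_div_mul (c : ℝ) {r : ℝ} (hr : 0 < r) :
    √(2 / (c * r)) = √(2 / c) * r ^ (-(1 / 2) : ℝ) := by
  rw [← div_div, Real.sqrt_div' _ hr.le, Real.rpow_neg hr.le, Real.sqrt_eq_rpow r,
    div_eq_mul_inv]

lemma integrableOn_sqrt_two_div_mul (c S : ℝ) :
    IntegrableOn (fun r => √(2 / (c * r))) (Ioo 0 S) := by
  rcases le_or_gt S 0 with hS | hS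
  · simp [Ioo_eq_empty hS.not_gt]
  have h1 : IntegrableOn (fun r : ℝ => r ^ (-(1 / 2) : ℝ)) (Ioo 0 S) := by
    rw [← integrableOn_Ioc_iff_integrableOn_Ioo,
      ← intervalIntegrable_iff_integrableOn_Ioc_of_le hS.le]
    exact intervalIntegral.intervalIntegrable_rpow' (by norm_num)
  exact IntegrableOn.congr_fun (h1.const_mul (√(2 / c)))
    (fun r hr => (sqrt_two_div_mul c hr.1).symm) measurableSet_Ioo

lemma setIntegral_sqrt_two_div_mul (c : ℝ) {x : ℝ} (hx : 0 ≤ x) :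
    ∫ r in Ioo 0 x, √(2 / (c * r)) = √(2 / c) * (2 * √x) := by
  rw [setIntegral_congr_fun measurableSet_Ioo fun r hr => sqrt_two_div_mul c hr.1,
    integral_const_mul, ← integral_Ioc_eq_integral_Ioo, ← intervalIntegral.integral_of_le hx,
    integral_rpow (Or.inl (by norm_num)), Real.sqrt_eq_rpow x]
  norm_num
  ring_nf
  simp

lemma setIntegral_Ioo_sub {u : ℝ → ℝ} {S x : ℝ} (hu : IntegrableOn u (Ioo 0 S))
    (hx : x ∈ Icc 0 S) :
    (∫ r in Ioo 0 S, u r) - ∫ r in Ioo 0 x, u r = ∫ r in Ioo x S, u r := by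
  simp only [← integral_Ioc_eq_integral_Ioo]
  rw [← integrableOn_Ioc_iff_integrableOn_Ioo] at hu
  rw [← Ioc_union_Ioc_eq_Ioc hx.1 hx.2, setIntegral_union
    (Set.disjoint_left.2 fun y hy hy' => hy'.1.not_ge hy.2) measurableSet_Ioc
    (hu.mono_set (Ioc_subset_Ioc_right hx.2)) (hu.mono_set (Ioc_subset_Ioc_left hx.1))]
  ring

lemma setIntegral_Ioo_comp_const_sub (u : ℝ → ℝ) (S : ℝ) {x : ℝ} (hx : 0 ≤ x) :
    ∫ r in Ioo 0 x, u (S - r) = ∫ r in Ioo (S - x) S, u r := by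
  rw [← integral_Ioc_eq_integral_Ioo, ← integral_Ioc_eq_integral_Ioo,
    ← intervalIntegral.integral_of_le hx, ← intervalIntegral.integral_of_le (by linarith),
    intervalIntegral.integral_comp_sub_left (fun r => u r) S, sub_zero]

/-- An integrable majorant for `√(2 / h)`, depending only on a lower bound for `h (S / 2)`. -/
lemma ConcaveOn.sqrt_two_div_le {h : ℝ → ℝ} {S c : ℝ} (hc : ConcaveOn ℝ (Icc 0 S) h)
    (h0 : h 0 = 0) (hS : h S = 0) (hc0 : 0 < c) (hch : c ≤ h (S / 2)) {r : ℝ}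
    (hr : r ∈ Ioo 0 S) :
    0 < h r ∧ √(2 / h r) ≤ √(2 / (c / S * r)) + √(2 / (c / S * (S - r))) := by
  have hSpos : 0 < S := hr.1.trans hr.2
  rcases le_total r (S / 2) with hle | hle
  · have h1 := hc.div_mul_le h0 hr.1.le hle (by linarith) (by linarith)
    have hpos : 0 < c / S * r := mul_pos (by positivity) hr.1
    have h2 : c / S * r ≤ h r := by
      refine le_trans ?_ h1
      rw [show c / S * r = r / S * c by ring]
      have := hr.1
      gcongr
      linarith
    refine ⟨hpos.trans_le h2, le_add_of_le_of_nonneg (Real.sqrt_le_sqrt ?_) (Real.sqrt_nonneg _)⟩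
    gcongr
  · have h1 := hc.div_mul_le_right hS (by linarith) hle hr.2.le (by linarith)
    have hr' : 0 < S - r := by linarith [hr.2]
    have hpos : 0 < c / S * (S - r) := mul_pos (by positivity) hr'
    have h2 : c / S * (S - r) ≤ h r := by
      refine le_trans ?_ h1
      rw [show c / S * (S - r) = (S - r) / S * c by ring]
      have hmid : 0 < S - S / 2 := by linarith
      gcongr
      linarith
    refine ⟨hpos.trans_le h2, le_add_of_nonneg_of_le (Real.sqrt_nonneg _) (Real.sqrt_le_sqrt ?_)⟩
    gcongr

lemma integrableOn_majorant {S : ℝ} (hS : 0 < S) (c : ℝ) :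
    IntegrableOn (fun r => √(2 / (c / S * r)) + √(2 / (c / S * (S - r)))) (Ioo 0 S) := by
  have h1 := integrableOn_sqrt_two_div_mul (c / S) S
  refine h1.add ?_
  rw [← integrableOn_Ioc_iff_integrableOn_Ioo,
      ← intervalIntegrable_iff_integrableOn_Ioc_of_le hS.le] at h1 ⊢
  simpa using (h1.comp_sub_left S).symm

lemma ConcaveOn.integrableOn_sqrt_two_div {h : ℝ → ℝ} {S : ℝ}
    (hc : ConcaveOn ℝ (Icc 0 S) h) (hcont : ContinuousOn h (Ioo 0 S)) (hSpos : 0 < S)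
    (h0 : h 0 = 0) (hS : h S = 0) (hmid : 0 < h (S / 2)) :
    IntegrableOn (fun r => √(2 / h r)) (Ioo 0 S) := by
  refine (integrableOn_majorant hSpos (h (S / 2))).mono' ?_ ?_
  · refine ContinuousOn.aestronglyMeasurable ?_ measurableSet_Ioo
    exact (continuousOn_const.div hcont fun r hr =>
      (hc.sqrt_two_div_le h0 hS hmid le_rfl hr).1.ne').sqrt
  · refine (ae_restrict_iff' measurableSet_Ioo).2 (ae_of_all _ fun r hr => ?_)
    rw [Real.norm_of_nonneg (Real.sqrt_nonneg _)]
    exact (hc.sqrt_two_div_le h0 hS hmid le_rfl hr).2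

lemma ConcaveOn.deriv_mul_le {h : ℝ → ℝ} {S x d : ℝ} (hc : ConcaveOn ℝ (Icc 0 S) h)
    (h0 : h 0 = 0) (hx : x ∈ Ioo 0 S) (hd : HasDerivAt h d x) : d * x ≤ h x := by
  have := hc.le_slope_of_hasDerivAt (left_mem_Icc.2 (hx.1.trans hx.2).le)
    (Ioo_subset_Icc_self hx) hx.1 hd
  rwa [slope_def_field, h0, sub_zero, sub_zero, le_div_iff₀ hx.1] at this

lemma ConcaveOn.sq_mul_setIntegral_le {h : ℝ → ℝ} {S x d : ℝ}
    (hc : ConcaveOn ℝ (Icc 0 S) h) (h0 : h 0 = 0) (hx : x ∈ Ico 0 S)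
    (hd : HasDerivAt h d x) (hdpos : 0 < d) :
    d ^ 2 * ∫ r in Ioo 0 x, √(2 / h r) ≤ √(8 * (d ^ 3 * x)) := by
  have h1 : ∫ r in Ioo 0 x, √(2 / h r) ≤ √(2 / d) * (2 * √x) := by
    rw [← setIntegral_sqrt_two_div_mul d hx.1]
    refine integral_mono_of_nonneg (ae_of_all _ fun r => Real.sqrt_nonneg _)
      (integrableOn_sqrt_two_div_mul d x)
      ((ae_restrict_iff' measurableSet_Ioo).2 (ae_of_all _ fun r hr => ?_))
    have hx0 : 0 < x := hr.1.trans hr.2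
    have h2 := hc.deriv_mul_le h0 ⟨hx0, hx.2⟩ hd
    have h3 := hc.div_mul_le h0 hr.1.le hr.2.le hx0 hx.2.le
    have h4 : d * r ≤ h r := by
      calc d * r = r / x * (d * x) := by field_simp
        _ ≤ r / x * h x := by have := hr.1; gcongr
        _ ≤ h r := h3
    have : 0 < d * r := mul_pos hdpos hr.1
    exact Real.sqrt_le_sqrt (by gcongr)
  refine (mul_le_mul_of_nonneg_left h1 (sq_nonneg d)).trans (Real.le_sqrt_of_sq_le ?_)
  rw [mul_pow, mul_pow, mul_pow, Real.sq_sqrt hx.1, Real.sq_sqrt (by positivity)]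
  apply le_of_eq
  field_simp
  ring

/-- A positive `C¹` function on `(0, S)` that extends to a concave function on `[0, S]`
vanishing at both ends. -/
structure IsConcaveProfile (S : ℝ) (m : ℝ → ℝ) : Prop where
  pos_right : 0 < S
  differentiableAt : ∀ z ∈ Ioo 0 S, DifferentiableAt ℝ m z
  continuousOn_deriv : ContinuousOn (deriv m) (Ioo 0 S)
  pos : ∀ z ∈ Ioo 0 S, 0 < m z
  exists_extension : ∃ M : ℝ → ℝ, ContinuousOn M (Icc 0 S) ∧ ConcaveOn ℝ (Icc 0 S) M ∧
    M 0 = 0 ∧ M S = 0 ∧ EqOn M m (Ioo 0 S)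

lemma IsConcaveProfile.of_deriv_two {S : ℝ} {m : ℝ → ℝ} (hS : 0 < S)
    (hm_c2 : ContDiffOn ℝ 2 m (Ioo 0 S)) (hm_pos : ∀ z ∈ Ioo (0 : ℝ) S, 0 < m z)
    (hm_conc : ∀ z ∈ Ioo (0 : ℝ) S, deriv (deriv m) z ≤ 0)
    (hm0 : Tendsto m (𝓝[>] (0 : ℝ)) (𝓝 0)) (hmS : Tendsto m (𝓝[<] S) (𝓝 0)) :
    IsConcaveProfile S m := by
  have hdiff : ∀ z ∈ Ioo 0 S, DifferentiableAt ℝ m z := fun z hz =>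
    (hm_c2.differentiableOn (by norm_num)).differentiableAt (isOpen_Ioo.mem_nhds hz)
  have hderiv : ContDiffOn ℝ 1 (deriv m) (Ioo 0 S) :=
    hm_c2.deriv_of_isOpen isOpen_Ioo (by norm_num)
  have hd2 : ∀ z ∈ Ioo 0 S, DifferentiableAt ℝ (deriv m) z := fun z hz =>
    (hderiv.differentiableOn (by norm_num)).differentiableAt (isOpen_Ioo.mem_nhds hz)
  have hcont : ContinuousOn m (Ioo 0 S) := hm_c2.continuousOn
  refine ⟨hS, hdiff, hderiv.continuousOn, hm_pos, extendFrom (Ioo 0 S) m, ?_, ?_, ?_, ?_, ?_⟩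
  · exact continuousOn_Icc_extendFrom_Ioo hcont hm0 hmS
  · have heq : EqOn (extendFrom (Ioo 0 S) m) m (Ioo 0 S) := fun z hz =>
      extendFrom_eq (subset_closure hz) (hcont z hz)
    have hev : ∀ z ∈ Ioo 0 S, extendFrom (Ioo 0 S) m =ᶠ[𝓝 z] m := fun z hz =>
      heq.eventuallyEq_of_mem (isOpen_Ioo.mem_nhds hz)
    apply concaveOn_of_deriv2_nonpos (convex_Icc 0 S)
    · exact continuousOn_Icc_extendFrom_Ioo hcont hm0 hmS
    · rw [interior_Icc]
      exact fun z hz =>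
        ((hev z hz).differentiableAt_iff.2 (hdiff z hz)).differentiableWithinAt
    · rw [interior_Icc]
      exact fun z hz =>
        ((hev z hz).deriv.differentiableAt_iff.2 (hd2 z hz)).differentiableWithinAt
    · rw [interior_Icc]
      intro z hz
      rw [Function.iterate_succ, Function.iterate_one, Function.comp_apply,
        (hev z hz).deriv.deriv_eq]
      exact hm_conc z hz
  · exact eq_lim_at_left_extendFrom_Ioo hS hm0
  · exact eq_lim_at_right_extendFrom_Ioo hS hmS
  · exact fun z hz => extendFrom_eq (subset_closure hz) (hcont z hz)

/-- `z₁ < z₂` are points of the interior at which `m` takes the value `δ`. -/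
structure IsLevelPair (S : ℝ) (m : ℝ → ℝ) (δ z₁ z₂ : ℝ) : Prop where
  left_pos : 0 < z₁
  lt : z₁ < z₂
  lt_right : z₂ < S
  eq_left : m z₁ = δ
  eq_right : m z₂ = δ

/-- The part of `m` above the level `δ`, moved down and stretched to `[0, S]`. -/
noncomputable def truncatedProfile (S : ℝ) (m : ℝ → ℝ) (δ z₁ z₂ : ℝ) : ℝ → ℝ :=
  fun x => m (z₁ + (z₂ - z₁) * x / S) - δ

namespace IsConcaveProfile

variable {S : ℝ} {m : ℝ → ℝ}

lemma continuousOn (P : IsConcaveProfile S m) : ContinuousOn m (Ioo 0 S) :=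
  fun z hz => (P.differentiableAt z hz).continuousAt.continuousWithinAt

lemma hasDerivAt (P : IsConcaveProfile S m) {z : ℝ} (hz : z ∈ Ioo 0 S) :
    HasDerivAt m (deriv m z) z :=
  (P.differentiableAt z hz).hasDerivAt

lemma concaveOn (P : IsConcaveProfile S m) : ConcaveOn ℝ (Ioo 0 S) m := by
  obtain ⟨M, -, hM, -, -, heq⟩ := P.exists_extension
  exact (hM.subset Ioo_subset_Icc_self (convex_Ioo 0 S)).congr heq

lemma reflect (P : IsConcaveProfile S m) : IsConcaveProfile S fun z => m (S - z) := by
  have hmaps : MapsTo (fun z : ℝ => S - z) (Ioo 0 S) (Ioo 0 S) := fun z hz =>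
    ⟨by linarith [hz.2], by linarith [hz.1]⟩
  obtain ⟨M, h1, h2, h3, h4, h5⟩ := P.exists_extension
  refine ⟨P.pos_right, fun z hz => ?_, ?_, fun z hz => P.pos _ (hmaps hz),
    fun z => M (S - z), ?_, h2.comp_const_sub, by simpa using h4, by simpa using h3,
    fun z hz => h5 (hmaps hz)⟩
  · exact (P.differentiableAt _ (hmaps hz)).comp z (by fun_prop)
  · have : (deriv fun z => m (S - z)) = fun z => -deriv m (S - z) :=
      funext fun z => deriv_comp_const_sub m S z
    rw [this]
    exact (P.continuousOn_deriv.comp (by fun_prop) hmaps).neg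
  · exact h1.comp (by fun_prop) fun z hz => ⟨by linarith [hz.2], by linarith [hz.1]⟩

lemma tendsto_zero (P : IsConcaveProfile S m) : Tendsto m (𝓝[>] 0) (𝓝 0) := by
  obtain ⟨M, hc, -, h0, -, heq⟩ := P.exists_extension
  have h1 : Tendsto M (𝓝[>] 0) (𝓝 0) := by
    have := (hc 0 (left_mem_Icc.2 P.pos_right.le)).mono_of_mem_nhdsWithin
      (s := Ioi 0) (mem_of_superset (Ioo_mem_nhdsGT P.pos_right) Ioo_subset_Icc_self)
    simpa [ContinuousWithinAt, h0] using this
  exact h1.congr' (eventually_of_mem (Ioo_mem_nhdsGT P.pos_right) heq)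

lemma deriv_mul_le (P : IsConcaveProfile S m) {z : ℝ} (hz : z ∈ Ioo 0 S) :
    deriv m z * z ≤ m z := by
  obtain ⟨M, -, hM, h0, -, heq⟩ := P.exists_extension
  rw [← heq hz]
  exact hM.deriv_mul_le h0 hz
    ((P.hasDerivAt hz).congr_of_eventuallyEq (heq.eventuallyEq_of_mem (isOpen_Ioo.mem_nhds hz)))

lemma exists_deriv_pos (P : IsConcaveProfile S m) :
    ∃ a ∈ Ioo 0 S, ∀ z ∈ Ioc 0 a, 0 < deriv m z := by
  obtain ⟨M, hc, hM, h0, -, heq⟩ := P.exists_extension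
  have hev : ∀ z ∈ Ioo 0 S, M =ᶠ[𝓝 z] m := fun z hz =>
    heq.eventuallyEq_of_mem (isOpen_Ioo.mem_nhds hz)
  have hb : S / 2 ∈ Ioo 0 S := ⟨by linarith [P.pos_right], by linarith [P.pos_right]⟩
  have hsub : Ioo 0 (S / 2) ⊆ Ioo 0 S := Ioo_subset_Ioo_right hb.2.le
  obtain ⟨a, ha, hda⟩ := exists_deriv_eq_slope M hb.1
    (hc.mono (Icc_subset_Icc_right hb.2.le)) fun z hz =>
      ((hev z (hsub hz)).differentiableAt_iff.2
        (P.differentiableAt z (hsub hz))).differentiableWithinAt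
  refine ⟨a, hsub ha, fun z hz => ?_⟩
  have h1 : 0 < deriv m a := by
    rw [← (hev a (hsub ha)).deriv_eq, hda, h0, heq hb]
    have := P.pos _ hb
    have := hb.1
    simp only [sub_zero]
    positivity
  exact h1.trans_le (P.concaveOn.antitoneOn_deriv P.differentiableAt
    ⟨hz.1, hz.2.trans_lt (hsub ha).2⟩ (hsub ha) hz.2)

lemma integrableOn (P : IsConcaveProfile S m) :
    IntegrableOn (fun r => √(2 / m r)) (Ioo 0 S) := by
  obtain ⟨M, hc, hM, h0, hS, heq⟩ := P.exists_extension
  have hb : S / 2 ∈ Ioo 0 S := ⟨by linarith [P.pos_right], by linarith [P.pos_right]⟩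
  refine (hM.integrableOn_sqrt_two_div (hc.mono Ioo_subset_Icc_self) P.pos_right h0 hS
    (by rw [heq hb]; exact P.pos _ hb)).congr_fun (fun r hr => ?_) measurableSet_Ioo
  simp only [heq hr]

/-- Under the boundary condition at `0`, `m'(y) ^ 3 * y` tends to `0`. -/
lemma tendsto_deriv_cube_mul (P : IsConcaveProfile S m)
    (h : Tendsto (fun z => deriv m z ^ 2 * ∫ r in Ioo 0 z, √(2 / m r)) (𝓝[>] 0) (𝓝 0)) :
    Tendsto (fun y => deriv m y ^ 3 * y) (𝓝[>] 0) (𝓝 0) := by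
  obtain ⟨a, ha, hpos⟩ := P.exists_deriv_pos
  have hsub : Ioo 0 a ⊆ Ioo 0 S := Ioo_subset_Ioo_right ha.2.le
  have hmono : MonotoneOn m (Ioo 0 a) := by
    apply monotoneOn_of_deriv_nonneg (convex_Ioo 0 a) (P.continuousOn.mono hsub)
    · rw [interior_Ioo]
      exact fun z hz => (P.differentiableAt z (hsub hz)).differentiableWithinAt
    · rw [interior_Ioo]
      exact fun z hz => (hpos z ⟨hz.1, hz.2.le⟩).le
  refine tendsto_cube_mul_of_tendsto ha.1 (fun y hy => P.hasDerivAt (hsub hy))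
    (fun y hy => P.pos y (hsub hy)) P.tendsto_zero (fun y hy => hpos y ⟨hy.1, hy.2.le⟩)
    (fun y hy => P.deriv_mul_le (hsub hy)) ?_
  refine squeeze_zero' ?_ ?_ h
  · filter_upwards [self_mem_nhdsWithin] with y hy
    have : 0 < y := hy
    positivity
  · filter_upwards [Ioo_mem_nhdsGT ha.1] with y hy
    refine mul_le_mul_of_nonneg_left ?_ (sq_nonneg _)
    have h1 : ∫ _ in Ioo 0 y, √(2 / m y) = y * √(2 / m y) := by
      simp [hy.1.le]
    rw [← h1]
    refine setIntegral_mono_on (by simp) (P.integrableOn.mono_set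
      (Ioo_subset_Ioo_right (hsub hy).2.le)) measurableSet_Ioo fun r hr => ?_
    have hra : r ∈ Ioo 0 a := ⟨hr.1, hr.2.trans hy.2⟩
    have := P.pos r (hsub hra)
    exact Real.sqrt_le_sqrt (by gcongr; exact hmono hra hy hr.2.le)

end IsConcaveProfile

namespace IsLevelPair

variable {S : ℝ} {m : ℝ → ℝ} {δ z₁ z₂ : ℝ}

lemma mapsTo_Icc (hL : IsLevelPair S m δ z₁ z₂) (hS : 0 < S) {x : ℝ} (hx : x ∈ Icc 0 S) :
    z₁ + (z₂ - z₁) * x / S ∈ Icc z₁ z₂ := by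
  have h1 : 0 ≤ z₂ - z₁ := sub_nonneg.2 hL.lt.le
  have h2 : 0 ≤ (z₂ - z₁) * x / S := div_nonneg (mul_nonneg h1 hx.1) hS.le
  have h3 : (z₂ - z₁) * x / S ≤ z₂ - z₁ :=
    (div_le_iff₀ hS).2 (mul_le_mul_of_nonneg_left hx.2 h1)
  constructor <;> linarith

lemma Icc_subset (hL : IsLevelPair S m δ z₁ z₂) : Icc z₁ z₂ ⊆ Ioo 0 S := fun _ hz =>
  ⟨hL.left_pos.trans_le hz.1, hz.2.trans_lt hL.lt_right⟩

lemma mapsTo_Ioo (hL : IsLevelPair S m δ z₁ z₂) (hS : 0 < S) {x : ℝ} (hx : x ∈ Icc 0 S) :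
    z₁ + (z₂ - z₁) * x / S ∈ Ioo 0 S :=
  hL.Icc_subset (hL.mapsTo_Icc hS hx)

lemma truncatedProfile_zero (hL : IsLevelPair S m δ z₁ z₂) :
    truncatedProfile S m δ z₁ z₂ 0 = 0 := by
  simp [truncatedProfile, hL.eq_left]

lemma truncatedProfile_right (hL : IsLevelPair S m δ z₁ z₂) (hS : 0 < S) :
    truncatedProfile S m δ z₁ z₂ S = 0 := by
  simp [truncatedProfile, hL.eq_right, hS.ne']

lemma concaveOn_truncatedProfile (hL : IsLevelPair S m δ z₁ z₂) (P : IsConcaveProfile S m) :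
    ConcaveOn ℝ (Icc 0 S) (truncatedProfile S m δ z₁ z₂) := by
  refine ⟨convex_Icc 0 S, fun x hx y hy a b ha hb hab => ?_⟩
  have h1 := P.concaveOn.2 (hL.mapsTo_Ioo P.pos_right hx) (hL.mapsTo_Ioo P.pos_right hy)
    ha hb hab
  have h2 : a • (z₁ + (z₂ - z₁) * x / S) + b • (z₁ + (z₂ - z₁) * y / S) =
      z₁ + (z₂ - z₁) * (a • x + b • y) / S := by
    simp only [smul_eq_mul]
    linear_combination z₁ * hab
  rw [h2] at h1
  simp only [truncatedProfile, smul_eq_mul] at h1 ⊢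
  linear_combination h1 - δ * hab

lemma hasDerivAt_truncatedProfile (hL : IsLevelPair S m δ z₁ z₂) (P : IsConcaveProfile S m)
    {x : ℝ} (hx : x ∈ Icc 0 S) :
    HasDerivAt (truncatedProfile S m δ z₁ z₂)
      ((z₂ - z₁) / S * deriv m (z₁ + (z₂ - z₁) * x / S)) x := by
  have h1 := P.hasDerivAt (hL.mapsTo_Ioo P.pos_right hx)
  have h2 : HasDerivAt (fun x : ℝ => z₁ + (z₂ - z₁) * x / S) ((z₂ - z₁) / S) x := by
    simpa using (((hasDerivAt_id x).const_mul (z₂ - z₁)).div_const S).const_add z₁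
  refine ((h1.comp x h2).sub_const δ).congr_deriv (mul_comm _ _)

lemma continuousOn_truncatedProfile (hL : IsLevelPair S m δ z₁ z₂) (P : IsConcaveProfile S m) :
    ContinuousOn (truncatedProfile S m δ z₁ z₂) (Icc 0 S) := fun _ hx =>
  (hL.hasDerivAt_truncatedProfile P hx).continuousAt.continuousWithinAt

lemma reflect (hL : IsLevelPair S m δ z₁ z₂) :
    IsLevelPair S (fun z => m (S - z)) δ (S - z₂) (S - z₁) :=
  ⟨sub_pos.2 hL.lt_right, by linarith [hL.lt], by linarith [hL.left_pos],
    by simpa using hL.eq_right, by simpa using hL.eq_left⟩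

lemma truncatedProfile_reflect (hS : 0 < S) (x : ℝ) :
    truncatedProfile S (fun z => m (S - z)) δ (S - z₂) (S - z₁) x =
      truncatedProfile S m δ z₁ z₂ (S - x) := by
  simp only [truncatedProfile]
  congr 2
  field_simp
  ring

/-- At points moved to the right by the stretching, the truncated profile is below `m`. -/
lemma truncatedProfile_le_of_le (hL : IsLevelPair S m δ z₁ z₂) (P : IsConcaveProfile S m)
    {x : ℝ} (hx : x ∈ Ioo 0 S) (hxy : x ≤ z₁ + (z₂ - z₁) * x / S) :
    truncatedProfile S m δ z₁ z₂ x ≤ m x := by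
  obtain ⟨M, -, hM, h0, -, heq⟩ := P.exists_extension
  have hx' := Ioo_subset_Icc_self hx
  have hy := hL.mapsTo_Ioo P.pos_right hx'
  have hy1 := (hL.mapsTo_Icc P.pos_right hx').1
  have hz1 := hL.left_pos
  have hyx : z₁ + (z₂ - z₁) * x / S - x ≤ z₁ := by
    have : (z₂ - z₁) * x / S ≤ x := (div_le_iff₀ P.pos_right).2 <| by
      rw [mul_comm]
      exact mul_le_mul_of_nonneg_left (by linarith [hL.lt_right]) hx.1.le
    linarith
  simp only [truncatedProfile]
  set y := z₁ + (z₂ - z₁) * x / S with hydef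
  have h1 := hM.div_mul_le h0 hx.1.le hxy hy.1 hy.2.le
  have h2 := hM.div_mul_le h0 hz1.le hy1 hy.1 hy.2.le
  rw [heq hy, heq hx] at h1
  rw [heq hy, heq ⟨hz1, hL.lt.trans hL.lt_right⟩, hL.eq_left] at h2
  have h3 : (y - x) / y * m y ≤ z₁ / y * m y := by
    have := P.pos y hy
    have := hy.1
    gcongr
  have h4 : (y - x) / y * m y = m y - x / y * m y := by
    have := hy.1.ne'
    field_simp
  linarith

lemma truncatedProfile_le (hL : IsLevelPair S m δ z₁ z₂) (P : IsConcaveProfile S m)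
    {x : ℝ} (hx : x ∈ Ioo 0 S) : truncatedProfile S m δ z₁ z₂ x ≤ m x := by
  rcases le_total x (z₁ + (z₂ - z₁) * x / S) with h | h
  · exact hL.truncatedProfile_le_of_le P hx h
  · have h1 := hL.reflect.truncatedProfile_le_of_le P.reflect (x := S - x)
      ⟨by linarith [hx.2], by linarith [hx.1]⟩ (by
        have : (S - z₁ - (S - z₂)) * (S - x) / S = z₂ - z₁ - (z₂ - z₁) * x / S := by
          have := P.pos_right.ne'
          field_simp
          ring
        rw [this]
        linarith)
    simpa [truncatedProfile_reflect P.pos_right] using h1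

lemma tendsto_left {ι : Type*} {l : Filter ι} (P : IsConcaveProfile S m) {δ z₁ z₂ : ι → ℝ}
    (hL : ∀ k, IsLevelPair S m (δ k) (z₁ k) (z₂ k)) (hz₁ : Tendsto z₁ l (𝓝 0))
    (h : Tendsto (fun z => deriv m z ^ 2 * ∫ r in Ioo 0 z, √(2 / m r)) (𝓝[>] 0) (𝓝 0)) :
    Tendsto (fun p : ι × ℝ => deriv (truncatedProfile S m (δ p.1) (z₁ p.1) (z₂ p.1)) p.2 ^ 2 *
      ∫ r in Ioo 0 p.2, √(2 / truncatedProfile S m (δ p.1) (z₁ p.1) (z₂ p.1) r))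
      (l ×ˢ 𝓝[≥] 0) (𝓝 0) := by
  have hS := P.pos_right
  set y : ι × ℝ → ℝ := fun p => z₁ p.1 + (z₂ p.1 - z₁ p.1) * p.2 / S with hydef
  have hsnd : ∀ᶠ p : ι × ℝ in l ×ˢ 𝓝[≥] 0, p.2 ∈ Ico 0 S :=
    tendsto_snd.eventually (Ico_mem_nhdsGE hS)
  have hy : Tendsto y (l ×ˢ 𝓝[≥] 0) (𝓝[>] 0) := by
    refine tendsto_nhdsWithin_iff.2 ⟨?_, hsnd.mono fun p hp =>
      ((hL p.1).mapsTo_Ioo hS (Ico_subset_Icc_self hp)).1⟩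
    have h1 : Tendsto (fun p : ι × ℝ => z₁ p.1 + p.2) (l ×ˢ 𝓝[≥] 0) (𝓝 0) := by
      simpa using (hz₁.comp tendsto_fst).add
        ((tendsto_snd (f := l) (g := 𝓝[≥] (0 : ℝ))).mono_right nhdsWithin_le_nhds)
    refine squeeze_zero' (hsnd.mono fun p hp =>
      ((hL p.1).mapsTo_Ioo hS (Ico_subset_Icc_self hp)).1.le) (hsnd.mono fun p hp => ?_) h1
    refine add_le_add_right ((div_le_iff₀ hS).2 ?_) _
    rw [mul_comm]
    exact mul_le_mul_of_nonneg_left (by linarith [(hL p.1).lt_right, (hL p.1).left_pos]) hp.1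
  have hcube : Tendsto (fun p => √(8 * (deriv m (y p) ^ 3 * y p))) (l ×ˢ 𝓝[≥] 0) (𝓝 0) := by
    simpa using (((P.tendsto_deriv_cube_mul h).comp hy).const_mul 8).sqrt
  obtain ⟨a, ha, hpos⟩ := P.exists_deriv_pos
  refine squeeze_zero' (Eventually.of_forall fun p => ?_) ?_ hcube
  · exact mul_nonneg (sq_nonneg _) (integral_nonneg fun _ => Real.sqrt_nonneg _)
  · filter_upwards [hsnd, hy (Ioc_mem_nhdsGT ha.1)] with p hp hyp
    have hLp := hL p.1
    have hd := hLp.hasDerivAt_truncatedProfile P (Ico_subset_Icc_self hp)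
    have hpy : 0 < deriv m (y p) := hpos _ hyp
    have hc : 0 < (z₂ p.1 - z₁ p.1) / S := div_pos (sub_pos.2 hLp.lt) hS
    have hc1 : (z₂ p.1 - z₁ p.1) / S ≤ 1 :=
      (div_le_one hS).2 (by linarith [hLp.lt_right, hLp.left_pos])
    have hcx : (z₂ p.1 - z₁ p.1) / S * p.2 ≤ y p := by
      have := hLp.left_pos
      simp only [hydef]
      rw [div_mul_eq_mul_div]
      linarith
    rw [hd.deriv]
    refine ((hLp.concaveOn_truncatedProfile P).sq_mul_setIntegral_le hLp.truncatedProfile_zero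
      hp hd (mul_pos hc hpy)).trans (Real.sqrt_le_sqrt ?_)
    refine mul_le_mul_of_nonneg_left ?_ (by norm_num)
    set c := (z₂ p.1 - z₁ p.1) / S
    calc (c * deriv m (y p)) ^ 3 * p.2 = c ^ 2 * (deriv m (y p) ^ 3 * (c * p.2)) := by ring
      _ ≤ 1 * (deriv m (y p) ^ 3 * y p) := by
        have := hp.1
        gcongr
        exact pow_le_one₀ hc.le hc1
      _ = deriv m (y p) ^ 3 * y p := one_mul _

lemma tendsto_endpoint {ι : Type*} {l : Filter ι} (P : IsConcaveProfile S m) {δ z₁ z₂ : ι → ℝ}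
    (hz : ∀ k, z₁ k ∈ Ioo (0 : ℝ) S ∧ z₂ k ∈ Ioo (0 : ℝ) S ∧ z₁ k < z₂ k ∧
      m (z₁ k) = δ k ∧ m (z₂ k) = δ k ∧
      ∀ z ∈ Ioo (0 : ℝ) S, m z = δ k → z = z₁ k ∨ z = z₂ k)
    (hδ : Tendsto δ l (𝓝 0)) : Tendsto z₁ l (𝓝 0) := by
  obtain ⟨M, hc, -, h0, -, heq⟩ := P.exists_extension
  refine tendsto_order.2 ⟨fun a ha => Eventually.of_forall fun k => ha.trans (hz k).1.1,
    fun a ha => ?_⟩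
  set e := min a (S / 2)
  have hS := P.pos_right
  have he : e ∈ Ioo 0 S := ⟨lt_min ha (half_pos hS), (min_le_right _ _).trans_lt (half_lt_self hS)⟩
  filter_upwards [hδ.eventually_lt_const (P.pos e he)] with k hk
  obtain ⟨h1, h2, h3, h4, h5, h6⟩ := hz k
  refine lt_of_lt_of_le ?_ (min_le_left a (S / 2))
  have hδk : 0 < δ k := h4 ▸ P.pos _ h1
  obtain ⟨z, hze, hzδ⟩ := intermediate_value_Ioo he.1.le
    (hc.mono (Icc_subset_Icc_right he.2.le)) (show δ k ∈ Ioo (M 0) (M e) by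
      rw [h0, heq he]; exact ⟨hδk, hk⟩)
  have hzS : z ∈ Ioo 0 S := ⟨hze.1, hze.2.trans he.2⟩
  rw [heq hzS] at hzδ
  rcases h6 z hzS hzδ with rfl | rfl
  · exact hze.2
  · exact h3.trans hze.2

section Convergence

variable {ι : Type*} {l : Filter ι} {δ z₁ z₂ : ι → ℝ}

lemma tendsto_endpoint_right (P : IsConcaveProfile S m)
    (hz : ∀ k, z₁ k ∈ Ioo (0 : ℝ) S ∧ z₂ k ∈ Ioo (0 : ℝ) S ∧ z₁ k < z₂ k ∧
      m (z₁ k) = δ k ∧ m (z₂ k) = δ k ∧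
      ∀ z ∈ Ioo (0 : ℝ) S, m z = δ k → z = z₁ k ∨ z = z₂ k)
    (hδ : Tendsto δ l (𝓝 0)) : Tendsto z₂ l (𝓝 S) := by
  have h1 : Tendsto (fun k => S - z₂ k) l (𝓝 0) := by
    refine tendsto_endpoint P.reflect (z₂ := fun k => S - z₁ k) (fun k => ?_) hδ
    obtain ⟨h1, h2, h3, h4, h5, h6⟩ := hz k
    refine ⟨⟨by linarith [h2.2], by linarith [h2.1]⟩, ⟨by linarith [h1.2], by linarith [h1.1]⟩,
      by linarith, by simpa using h5, by simpa using h4, fun z hzI hzδ => ?_⟩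
    rcases h6 (S - z) ⟨by linarith [hzI.2], by linarith [hzI.1]⟩ hzδ with h | h
    · right; linarith
    · left; linarith
  simpa using h1.const_sub S

lemma tendsto_affine (hS : 0 < S) (hz₁ : Tendsto z₁ l (𝓝 0)) (hz₂ : Tendsto z₂ l (𝓝 S)) (x : ℝ) :
    Tendsto (fun p : ι × ℝ => z₁ p.1 + (z₂ p.1 - z₁ p.1) * p.2 / S) (l ×ˢ 𝓝 x) (𝓝 x) := by
  have h1 := hz₁.comp (tendsto_fst (f := l) (g := 𝓝 x))
  have h2 := hz₂.comp (tendsto_fst (f := l) (g := 𝓝 x))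
  have h3 := h1.add (((h2.sub h1).mul (tendsto_snd (f := l) (g := 𝓝 x))).div_const S)
  have : 0 + (S - 0) * x / S = x := by field_simp; ring
  rwa [this] at h3

lemma tendsto_deriv_truncatedProfile (P : IsConcaveProfile S m)
    (hL : ∀ k, IsLevelPair S m (δ k) (z₁ k) (z₂ k))
    (hz₁ : Tendsto z₁ l (𝓝 0)) (hz₂ : Tendsto z₂ l (𝓝 S)) {x : ℝ} (hx : x ∈ Ioo 0 S) :
    Tendsto (fun p : ι × ℝ => deriv (truncatedProfile S m (δ p.1) (z₁ p.1) (z₂ p.1)) p.2)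
      (l ×ˢ 𝓝 x) (𝓝 (deriv m x)) := by
  have hS := P.pos_right
  have h1 : Tendsto (fun p : ι × ℝ => (z₂ p.1 - z₁ p.1) / S) (l ×ˢ 𝓝 x) (𝓝 1) := by
    have := ((hz₂.sub hz₁).div_const S).comp (tendsto_fst (f := l) (g := 𝓝 x))
    rwa [sub_zero, div_self hS.ne'] at this
  have h2 := (P.continuousOn_deriv.continuousAt (isOpen_Ioo.mem_nhds hx)).tendsto.comp
    (tendsto_affine hS hz₁ hz₂ x)
  have h3 := h1.mul h2
  rw [one_mul] at h3
  refine h3.congr' ?_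
  filter_upwards [tendsto_snd.eventually (isOpen_Ioo.mem_nhds hx)] with p hp
  exact ((hL p.1).hasDerivAt_truncatedProfile P (Ioo_subset_Icc_self hp)).deriv.symm

lemma tendsto_truncatedProfile (P : IsConcaveProfile S m)
    (hδ : Tendsto δ l (𝓝 0)) (hz₁ : Tendsto z₁ l (𝓝 0)) (hz₂ : Tendsto z₂ l (𝓝 S))
    {x : ℝ} (hx : x ∈ Ioo 0 S) :
    Tendsto (fun k => truncatedProfile S m (δ k) (z₁ k) (z₂ k) x) l (𝓝 (m x)) := by
  have h1 : Tendsto (fun k => (k, x)) l (l ×ˢ 𝓝 x) := tendsto_id.prodMk tendsto_const_nhds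
  have h2 := (P.differentiableAt x hx).continuousAt.tendsto.comp
    ((tendsto_affine P.pos_right hz₁ hz₂ x).comp h1)
  have h3 := h2.sub hδ
  rwa [sub_zero] at h3

lemma eventually_le_truncatedProfile (P : IsConcaveProfile S m)
    (hδ : Tendsto δ l (𝓝 0)) (hz₁ : Tendsto z₁ l (𝓝 0)) (hz₂ : Tendsto z₂ l (𝓝 S)) :
    ∃ c > 0, ∀ᶠ k in l, c ≤ truncatedProfile S m (δ k) (z₁ k) (z₂ k) (S / 2) := by
  have hb : S / 2 ∈ Ioo 0 S := ⟨half_pos P.pos_right, half_lt_self P.pos_right⟩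
  have hpos := P.pos _ hb
  have hlim := tendsto_truncatedProfile P hδ hz₁ hz₂ hb
  exact ⟨m (S / 2) / 2, half_pos hpos,
    (hlim.eventually_const_lt (half_lt_self hpos)).mono fun k hk => hk.le⟩

lemma integrableOn_truncatedProfile {δ z₁ z₂ : ℝ} (hL : IsLevelPair S m δ z₁ z₂)
    (P : IsConcaveProfile S m) (hmid : 0 < truncatedProfile S m δ z₁ z₂ (S / 2)) :
    IntegrableOn (fun r => √(2 / truncatedProfile S m δ z₁ z₂ r)) (Ioo 0 S) :=
  (hL.concaveOn_truncatedProfile P).integrableOn_sqrt_two_div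
    ((hL.continuousOn_truncatedProfile P).mono Ioo_subset_Icc_self) P.pos_right
    hL.truncatedProfile_zero (hL.truncatedProfile_right P.pos_right) hmid

lemma tendsto_setIntegral_truncatedProfile [l.IsCountablyGenerated] (P : IsConcaveProfile S m)
    (hL : ∀ k, IsLevelPair S m (δ k) (z₁ k) (z₂ k)) (hδ : Tendsto δ l (𝓝 0))
    (hz₁ : Tendsto z₁ l (𝓝 0)) (hz₂ : Tendsto z₂ l (𝓝 S)) :
    Tendsto (fun k => ∫ r in Ioo 0 S, √(2 / truncatedProfile S m (δ k) (z₁ k) (z₂ k) r)) l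
      (𝓝 (∫ r in Ioo 0 S, √(2 / m r))) := by
  obtain ⟨c, hc, hev⟩ := eventually_le_truncatedProfile P hδ hz₁ hz₂
  refine tendsto_integral_filter_of_dominated_convergence
    (fun r => √(2 / (c / S * r)) + √(2 / (c / S * (S - r)))) ?_ ?_
    (integrableOn_majorant P.pos_right c) ?_
  · exact hev.mono fun k hk =>
      (integrableOn_truncatedProfile (hL k) P (hc.trans_le hk)).aestronglyMeasurable
  · refine hev.mono fun k hk =>
      (ae_restrict_iff' measurableSet_Ioo).2 (ae_of_all _ fun r hr => ?_)
    rw [Real.norm_of_nonneg (Real.sqrt_nonneg _)]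
    exact (((hL k).concaveOn_truncatedProfile P).sqrt_two_div_le (hL k).truncatedProfile_zero
      ((hL k).truncatedProfile_right P.pos_right) hc hk hr).2
  · exact (ae_restrict_iff' measurableSet_Ioo).2 (ae_of_all _ fun r hr =>
      (tendsto_const_nhds.div (tendsto_truncatedProfile P hδ hz₁ hz₂ hr) (P.pos r hr).ne').sqrt)

lemma setIntegral_truncatedProfile_sub_mem {δ z₁ z₂ : ℝ} (hL : IsLevelPair S m δ z₁ z₂)
    (P : IsConcaveProfile S m) (hmid : 0 < truncatedProfile S m δ z₁ z₂ (S / 2))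
    {x : ℝ} (hx : x ∈ Icc 0 S) :
    (∫ r in Ioo 0 x, √(2 / truncatedProfile S m δ z₁ z₂ r)) - ∫ r in Ioo 0 x, √(2 / m r) ∈
      Icc 0 ((∫ r in Ioo 0 S, √(2 / truncatedProfile S m δ z₁ z₂ r)) -
        ∫ r in Ioo 0 S, √(2 / m r)) := by
  have hi := integrableOn_truncatedProfile hL P hmid
  have hsub : Ioo 0 x ⊆ Ioo 0 S := Ioo_subset_Ioo_right hx.2
  have hnn : ∀ r ∈ Ioo 0 S, 0 ≤ √(2 / truncatedProfile S m δ z₁ z₂ r) - √(2 / m r) := by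
    intro r hr
    have hpos := ((hL.concaveOn_truncatedProfile P).sqrt_two_div_le hL.truncatedProfile_zero
      (hL.truncatedProfile_right P.pos_right) hmid le_rfl hr).1
    refine sub_nonneg.2 (Real.sqrt_le_sqrt ?_)
    have := hL.truncatedProfile_le P hr
    gcongr
  rw [← integral_sub (hi.mono_set hsub) (P.integrableOn.mono_set hsub),
    ← integral_sub hi P.integrableOn]
  exact ⟨setIntegral_nonneg measurableSet_Ioo fun r hr => hnn r (hsub hr),
    setIntegral_mono_set (hi.sub P.integrableOn)
      ((ae_restrict_iff' measurableSet_Ioo).2 (ae_of_all _ hnn)) (ae_of_all _ hsub)⟩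

lemma tendsto_right (P : IsConcaveProfile S m)
    (hL : ∀ k, IsLevelPair S m (δ k) (z₁ k) (z₂ k)) (hδ : Tendsto δ l (𝓝 0))
    (hz₁ : Tendsto z₁ l (𝓝 0)) (hz₂ : Tendsto z₂ l (𝓝 S))
    (h : Tendsto (fun z => deriv m z ^ 2 *
      ((∫ r in Ioo 0 S, √(2 / m r)) - ∫ r in Ioo 0 z, √(2 / m r))) (𝓝[<] S) (𝓝 0)) :
    Tendsto (fun p : ι × ℝ => deriv (truncatedProfile S m (δ p.1) (z₁ p.1) (z₂ p.1)) p.2 ^ 2 *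
      ((∫ r in Ioo 0 S, √(2 / truncatedProfile S m (δ p.1) (z₁ p.1) (z₂ p.1) r)) -
        ∫ r in Ioo 0 p.2, √(2 / truncatedProfile S m (δ p.1) (z₁ p.1) (z₂ p.1) r)))
      (l ×ˢ 𝓝[≤] S) (𝓝 0) := by
  have hS := P.pos_right
  have href : Tendsto (fun z => deriv (fun y => m (S - y)) z ^ 2 *
      ∫ r in Ioo 0 z, √(2 / m (S - r))) (𝓝[>] 0) (𝓝 0) := by
    have hmap : Tendsto (fun z => S - z) (𝓝[>] 0) (𝓝[<] S) := by
      refine tendsto_nhdsWithin_iff.2 ⟨?_, eventually_mem_nhdsWithin.mono fun z hz =>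
        sub_lt_self S hz⟩
      have : Continuous fun z : ℝ => S - z := by fun_prop
      simpa using (this.tendsto 0).mono_left nhdsWithin_le_nhds
    refine (h.comp hmap).congr' ?_
    filter_upwards [Ioo_mem_nhdsGT hS] with z hz
    rw [Function.comp_apply, deriv_comp_const_sub, neg_sq,
      setIntegral_Ioo_comp_const_sub (fun r => √(2 / m r)) S hz.1.le,
      setIntegral_Ioo_sub P.integrableOn ⟨by linarith [hz.2], by linarith [hz.1]⟩]
  have h1 := tendsto_left P.reflect (fun k => (hL k).reflect)
    (by simpa using hz₂.const_sub S) href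
  have hmap : Tendsto (fun p : ι × ℝ => (p.1, S - p.2)) (l ×ˢ 𝓝[≤] S) (l ×ˢ 𝓝[≥] 0) := by
    refine tendsto_fst.prodMk (tendsto_nhdsWithin_iff.2 ⟨?_, ?_⟩)
    · simpa using ((tendsto_snd (f := l) (g := 𝓝[≤] S)).mono_right nhdsWithin_le_nhds).const_sub S
    · exact (tendsto_snd.eventually eventually_mem_nhdsWithin).mono fun p hp =>
        mem_Ici.2 (sub_nonneg.2 (mem_Iic.1 hp))
  refine (h1.comp hmap).congr' ?_
  obtain ⟨c, hc, hev⟩ := eventually_le_truncatedProfile P hδ hz₁ hz₂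
  filter_upwards [hev.prod_mk (Ioc_mem_nhdsLE hS)] with p hp
  have hpI := Ioc_subset_Icc_self hp.2
  have heq : truncatedProfile S (fun z => m (S - z)) (δ p.1) (S - z₂ p.1) (S - z₁ p.1) =
      fun x => truncatedProfile S m (δ p.1) (z₁ p.1) (z₂ p.1) (S - x) :=
    funext fun x => truncatedProfile_reflect hS x
  simp only [Function.comp_apply, heq]
  rw [deriv_comp_const_sub, neg_sq, sub_sub_cancel, setIntegral_Ioo_comp_const_sub
      (fun r => √(2 / truncatedProfile S m (δ p.1) (z₁ p.1) (z₂ p.1) r)) S (sub_nonneg.2 hpI.2),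
    sub_sub_cancel, setIntegral_Ioo_sub
      (integrableOn_truncatedProfile (hL p.1) P (hc.trans_le hp.1)) hpI]

end Convergence

end IsLevelPair

/-- A profile, with its own inverse `g`, satisfies the continuity claim for the limit map. -/
lemma IsConcaveProfile.continuousOn_deriv_comp_mul_sqrt {S : ℝ} {m g : ℝ → ℝ}
    (P : IsConcaveProfile S m)
    (hMS0 : Tendsto (fun z => deriv m z ^ 2 * ∫ r in Ioo 0 z, √(2 / m r)) (𝓝[>] 0) (𝓝 0))
    (hMSS : Tendsto (fun z => deriv m z ^ 2 *
      ((∫ r in Ioo 0 S, √(2 / m r)) - ∫ r in Ioo 0 z, √(2 / m r))) (𝓝[<] S) (𝓝 0))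
    (hmono : StrictMonoOn (fun z => ∫ r in Ioo 0 z, √(2 / m r)) (Icc 0 S))
    (hg : ∀ w ∈ Icc 0 (∫ r in Ioo 0 S, √(2 / m r)),
      g w ∈ Icc 0 S ∧ ∫ r in Ioo 0 (g w), √(2 / m r) = w) :
    ContinuousOn (fun w => deriv m (g w) * √(w * ((∫ r in Ioo 0 S, √(2 / m r)) - w)))
      (Icc 0 (∫ r in Ioo 0 S, √(2 / m r))) := by
  intro w hw
  have hl : Tendsto (fun z => deriv m z ^ 2 * ∫ r in Ioo 0 z, √(2 / m r)) (𝓝[≥] 0) (𝓝 0) := by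
    rw [← Ioi_insert, nhdsWithin_insert]
    refine Tendsto.sup ?_ hMS0
    rw [tendsto_pure_left, Ioo_self, setIntegral_empty, mul_zero]
    exact fun s hs => mem_of_mem_nhds hs
  have hr : Tendsto (fun z => deriv m z ^ 2 *
      ((∫ r in Ioo 0 S, √(2 / m r)) - ∫ r in Ioo 0 z, √(2 / m r))) (𝓝[≤] S) (𝓝 0) := by
    rw [← Iio_insert, nhdsWithin_insert]
    refine Tendsto.sup ?_ hMSS
    rw [tendsto_pure_left, sub_self, mul_zero]
    exact fun s hs => mem_of_mem_nhds hs
  have h := tendsto_deriv_comp_inverse_mul_sqrt (l := pure ()) P.pos_right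
    (F := fun z => ∫ r in Ioo 0 z, √(2 / m r)) (Fk := fun _ z => ∫ r in Ioo 0 z, √(2 / m r))
    (d := deriv m) (dk := fun _ => deriv m) (g := g) (gk := fun _ => g) (ρ := fun _ => 0)
    (by simp) hmono tendsto_const_nhds (Eventually.of_forall fun _ => ⟨le_rfl, by simp⟩)
    hg (fun _ => hg)
    (fun x hx => (P.continuousOn_deriv.continuousAt (isOpen_Ioo.mem_nhds hx)).tendsto.comp
      tendsto_snd) (hl.comp tendsto_snd) (hr.comp tendsto_snd) hw
  exact h.comp (tendsto_const_pure.prodMk tendsto_id)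

/-- Uniform convergence, case `S < ∞`: Let `m` satisfy (M) and (M-S) on
`(0,S)` with `S < ∞`, let `(δ_k)` be a vanishing sequence in `(0,δ̄)` with `δ̄ < max m`,
let `z_{δ_k,1} < z_{δ_k,2}` be the two solutions of `m(z) = δ_k`, and define
`m_{δ_k}(z) := m(z_{δ_k,1} + (z_{δ_k,2} − z_{δ_k,1}) z / S) − δ_k`,
`f_{δ_k}(z) := ∫₀^z √(2/m_{δ_k}(r)) dr`, `g_{δ_k} := f_{δ_k}⁻¹`, `g := f⁻¹` and
`G̃_{δ_k}(w) := m_{δ_k}'(g_{δ_k}(w)) √(w (f_{δ_k}(S) − w))`. Then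
`G̃(w) := m'(g(w)) √(w (f(S) − w))` (with `G̃(0) = G̃(f(S)) = 0`, automatic since
`√0 = 0`) is continuous on `[0, f(S)]`, and a subsequence of `(G̃_{δ_k})` converges to
`G̃` uniformly on `[0, f(S)]`. -/
theorem Gtilde_converges_uniformly
    (S : ℝ) (hS : 0 < S) (m : ℝ → ℝ)
    (hm_c2 : ContDiffOn ℝ 2 m (Ioo 0 S))
    (hm_pos : ∀ z ∈ Ioo (0 : ℝ) S, 0 < m z)
    (hm_conc : ∀ z ∈ Ioo (0 : ℝ) S, deriv (deriv m) z ≤ 0)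
    (hm0 : Tendsto m (𝓝[>] (0 : ℝ)) (𝓝 0))
    (hmS : Tendsto m (𝓝[<] S) (𝓝 0))
    (hMS0 : Tendsto
      (fun z : ℝ => (deriv m z) ^ 2 * ∫ r in Ioo (0 : ℝ) z, Real.sqrt (2 / m r))
      (𝓝[>] (0 : ℝ)) (𝓝 0))
    (hMSS : Tendsto
      (fun z : ℝ => (deriv m z) ^ 2 *
        ((∫ r in Ioo (0 : ℝ) S, Real.sqrt (2 / m r))
          - ∫ r in Ioo (0 : ℝ) z, Real.sqrt (2 / m r)))
      (𝓝[<] S) (𝓝 0))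
    (δbar : ℝ) (hδbar : 0 < δbar)
    (hδbarmax : ∃ z ∈ Ioo (0 : ℝ) S, δbar < m z)
    (δ : ℕ → ℝ) (hδmem : ∀ k, δ k ∈ Ioo (0 : ℝ) δbar)
    (hδ0 : Tendsto δ atTop (𝓝 0))
    (z1 z2 : ℕ → ℝ)
    (hz : ∀ k, z1 k ∈ Ioo (0 : ℝ) S ∧ z2 k ∈ Ioo (0 : ℝ) S ∧ z1 k < z2 k ∧
      m (z1 k) = δ k ∧ m (z2 k) = δ k ∧
      ∀ z ∈ Ioo (0 : ℝ) S, m z = δ k → z = z1 k ∨ z = z2 k)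
    (g : ℝ → ℝ)
    (hg_left : ∀ z ∈ Icc (0 : ℝ) S,
      g (∫ r in Ioo (0 : ℝ) z, Real.sqrt (2 / m r)) = z)
    (hg_right : ∀ w ∈ Icc (0 : ℝ) (∫ r in Ioo (0 : ℝ) S, Real.sqrt (2 / m r)),
      g w ∈ Icc (0 : ℝ) S ∧
      (∫ r in Ioo (0 : ℝ) (g w), Real.sqrt (2 / m r)) = w)
    (gδ : ℕ → ℝ → ℝ)
    (hgδ_left : ∀ k, ∀ z ∈ Icc (0 : ℝ) S,
      gδ k (∫ r in Ioo (0 : ℝ) z,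
        Real.sqrt (2 / (m (z1 k + (z2 k - z1 k) * r / S) - δ k))) = z)
    (hgδ_right : ∀ k, ∀ w ∈ Icc (0 : ℝ) (∫ r in Ioo (0 : ℝ) S,
        Real.sqrt (2 / (m (z1 k + (z2 k - z1 k) * r / S) - δ k))),
      gδ k w ∈ Icc (0 : ℝ) S ∧
      (∫ r in Ioo (0 : ℝ) (gδ k w),
        Real.sqrt (2 / (m (z1 k + (z2 k - z1 k) * r / S) - δ k))) = w) :
    ContinuousOn
      (fun w : ℝ => deriv m (g w) * Real.sqrt
        (w * ((∫ r in Ioo (0 : ℝ) S, Real.sqrt (2 / m r)) - w)))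
      (Icc 0 (∫ r in Ioo (0 : ℝ) S, Real.sqrt (2 / m r))) ∧
    ∃ φ : ℕ → ℕ, StrictMono φ ∧
      TendstoUniformlyOn
        (fun k (w : ℝ) =>
          deriv (fun x : ℝ => m (z1 (φ k) + (z2 (φ k) - z1 (φ k)) * x / S) - δ (φ k))
              (gδ (φ k) w)
            * Real.sqrt (w * ((∫ r in Ioo (0 : ℝ) S,
                Real.sqrt (2 / (m (z1 (φ k) + (z2 (φ k) - z1 (φ k)) * r / S) - δ (φ k))))
              - w)))
        (fun w : ℝ => deriv m (g w) * Real.sqrt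
          (w * ((∫ r in Ioo (0 : ℝ) S, Real.sqrt (2 / m r)) - w)))
        atTop (Icc 0 (∫ r in Ioo (0 : ℝ) S, Real.sqrt (2 / m r))) := by
  have P := IsConcaveProfile.of_deriv_two hS hm_c2 hm_pos hm_conc hm0 hmS
  have hL : ∀ k, IsLevelPair S m (δ k) (z1 k) (z2 k) := fun k =>
    let ⟨h1, h2, h3, h4, h5, _⟩ := hz k
    ⟨h1.1, h3, h2.2, h4, h5⟩
  have hz₁ := IsLevelPair.tendsto_endpoint P hz hδ0
  have hz₂ := IsLevelPair.tendsto_endpoint_right P hz hδ0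
  have hmono : StrictMonoOn (fun z => ∫ r in Ioo 0 z, √(2 / m r)) (Icc 0 S) := by
    refine MonotoneOn.strictMonoOn_of_injOn (fun a _ b hb hab => ?_) fun a ha b hb hab => ?_
    · exact setIntegral_mono_set (P.integrableOn.mono_set (Ioo_subset_Ioo_right hb.2))
        (ae_of_all _ fun _ => Real.sqrt_nonneg _) (ae_of_all _ (Ioo_subset_Ioo_right hab))
    · rw [← hg_left a ha, ← hg_left b hb]
      exact congrArg g hab
  have hcont := P.continuousOn_deriv_comp_mul_sqrt hMS0 hMSS hmono hg_right
  refine ⟨hcont, id, strictMono_id, tendstoUniformlyOn_of_tendsto_prod isCompact_Icc hcont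
    fun w hw => ?_⟩
  have hρ := (IsLevelPair.tendsto_setIntegral_truncatedProfile P hL hδ0 hz₁ hz₂).sub_const
    (∫ r in Ioo 0 S, √(2 / m r))
  rw [sub_self] at hρ
  obtain ⟨c, hc, hev⟩ := IsLevelPair.eventually_le_truncatedProfile P hδ0 hz₁ hz₂
  refine tendsto_deriv_comp_inverse_mul_sqrt hS
    (F := fun z => ∫ r in Ioo 0 z, √(2 / m r))
    (Fk := fun k z => ∫ r in Ioo 0 z, √(2 / truncatedProfile S m (δ k) (z1 k) (z2 k) r))
    (dk := fun k => deriv (truncatedProfile S m (δ k) (z1 k) (z2 k)))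
    (by simp) hmono hρ (hev.mono fun k hk => ?_) hg_right hgδ_right
    (fun x hx => IsLevelPair.tendsto_deriv_truncatedProfile P hL hz₁ hz₂ hx)
    (IsLevelPair.tendsto_left P hL hz₁ hMS0)
    (IsLevelPair.tendsto_right P hL hδ0 hz₁ hz₂ hMSS) hw
  have hmem := fun x (hx : x ∈ Icc 0 S) =>
    IsLevelPair.setIntegral_truncatedProfile_sub_mem (hL k) P (hc.trans_le hk) hx
  refine ⟨sub_nonneg.1 (hmem S (right_mem_Icc.2 hS.le)).1, fun x hx => ?_⟩
  rw [abs_of_nonneg (hmem x hx).1]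
  exact (hmem x hx).2
end
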